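/- Assume (A1)–(A5). Then there exists a threshold value s* ∈ [s₁, s₂) such that c*(s) = 2 for all s ∈ [0, s*] and c*(s) > 2 for all s ∈ (s*, ∞). Moreover, for s ≥ 0, the minimal traveling wave W_s (i.e. a front with speed c*(s)) satisfies W_s(ξ) = B e^{−ξ} + o(e^{−ξ}) as ξ → +∞ for some constant B > 0 if and only if s = s*. -/

import Mathlib

open Filter Asymptotics MeasureTheory Set

noncomputable section

/-- A traveling wave front with speed `c` for the nonlinearity `g`:
a decreasing `C²` solution of `W'' + c W' + g(W) = 0` connecting `1` (at `-∞`) to `0` (at `+∞`). -/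
def IsFront (g : ℝ → ℝ) (c : ℝ) (W : ℝ → ℝ) : Prop :=
  ContDiff ℝ 2 W ∧
  (∀ ξ, deriv (deriv W) ξ + c * deriv W ξ + g (W ξ) = 0) ∧
  Tendsto W atBot (nhds 1) ∧ Tendsto W atTop (nhds 0) ∧
  (∀ ξ, deriv W ξ < 0)

/-- Phase-plane profile: `p(w) = -W'` as a function of `w = W`. -/
structure IsProf (g : ℝ → ℝ) (c : ℝ) (p : ℝ → ℝ) : Prop where
  cont : ContinuousOn p (Icc 0 1)
  p0 : p 0 = 0
  p1 : p 1 = 0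
  pos : ∀ w ∈ Ioo (0:ℝ) 1, 0 < p w
  der : ∀ w ∈ Ioo (0:ℝ) 1, HasDerivAt p (c - g w / p w) w

/-- Comparison lemma: going left from `b`, `D` cannot become positive. -/
lemma comp_lemma {D : ℝ → ℝ} {a b : ℝ} (hc : ContinuousOn D (Icc a b)) (hb : D b ≤ 0)
    (hd : ∀ w ∈ Ioo a b, 0 < D w → ∃ d, 0 ≤ d ∧ HasDerivAt D d w) :
    ∀ w ∈ Icc a b, D w ≤ 0 := by
  intro w hw
  by_contra hpos
  push Not at hpos
  -- first zero to the right
  set S := {x ∈ Icc w b | D x ≤ 0} with hS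
  have hSc : IsClosed S := by
    have : ContinuousOn D (Icc w b) := hc.mono (Icc_subset_Icc_left hw.1)
    exact this.preimage_isClosed_of_isClosed isClosed_Icc isClosed_Iic
  have hSne : S.Nonempty := ⟨b, ⟨hw.2, le_rfl⟩, hb⟩
  have hSb : BddBelow S := ⟨w, fun x hx => hx.1.1⟩
  have hmem := hSc.csInf_mem hSne hSb
  set z := sInf S with hz
  have hzw : w ≤ z := hmem.1.1
  have hmono : MonotoneOn D (Icc w z) := by
    have hpos' : ∀ x ∈ Ioo w z, 0 < D x := by
      intro x hx
      by_contra h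
      push Not at h
      have : z ≤ x := csInf_le hSb ⟨⟨hx.1.le, hx.2.le.trans hmem.1.2⟩, h⟩
      linarith [hx.2]
    have hIoo : ∀ x ∈ Ioo w z, ∃ d, 0 ≤ d ∧ HasDerivAt D d x := fun x hx =>
      hd x ⟨lt_of_le_of_lt hw.1 hx.1, lt_of_lt_of_le hx.2 hmem.1.2⟩ (hpos' x hx)
    apply monotoneOn_of_deriv_nonneg (convex_Icc w z)
    · exact hc.mono (Icc_subset_Icc hw.1 hmem.1.2)
    · rw [interior_Icc]
      intro x hx
      obtain ⟨d, _, h⟩ := hIoo x hx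
      exact h.differentiableAt.differentiableWithinAt
    · rw [interior_Icc]
      intro x hx
      obtain ⟨d, h0, h⟩ := hIoo x hx
      rw [h.deriv]; exact h0
  have := hmono ⟨le_rfl, hzw⟩ ⟨hzw, le_rfl⟩ hzw
  linarith [hmem.2]

lemma prof_lower {g p : ℝ → ℝ} {c κ ε : ℝ} (hp : IsProf g c p)
    (hε : 0 < ε) (hεc : c + ε ≤ κ / ε) (hg : ∀ w ∈ Icc (0:ℝ) 1, κ * (w * (1 - w)) ≤ g w)
    (hκ : 0 < κ) :
    ∀ w ∈ Icc (0:ℝ) 1, ε * (w * (1 - w)) ≤ p w := by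
  intro w hw
  have := comp_lemma (D := fun w => ε * (w * (1 - w)) - p w) (a := 0) (b := 1)
    (by apply ContinuousOn.sub (by fun_prop) hp.cont) (by simp [hp.p1]) ?_ w hw
  · simpa using this
  · intro x hx hpos
    have h1 : HasDerivAt (fun w : ℝ => ε * (w * (1 - w))) (ε * (1 * (1 - x) + x * (0 - 1))) x := by
      exact ((hasDerivAt_id x).mul ((hasDerivAt_const x (1:ℝ)).sub (hasDerivAt_id x))).const_mul ε
    refine ⟨_, ?_, h1.sub (hp.der x hx)⟩
    have hpx := hp.pos x hx
    have hb : 0 < x * (1 - x) := mul_pos hx.1 (by linarith [hx.2])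
    have h2 : κ / ε ≤ g x / p x := by
      rw [div_le_div_iff₀ hε hpx]
      have := hg x ⟨hx.1.le, hx.2.le⟩
      have h3 : κ * p x ≤ κ * (ε * (x * (1 - x))) := by
        apply mul_le_mul_of_nonneg_left _ hκ.le
        linarith
      nlinarith
    have : 0 ≤ ε * (1 - x) := mul_nonneg hε.le (by linarith [hx.2])
    nlinarith

/-- a suitable epsilon -/
lemma exists_eps (c : ℝ) {κ ε₀ : ℝ} (hκ : 0 < κ) (hε₀ : 0 < ε₀) :
    ∃ ε, 0 < ε ∧ ε ≤ ε₀ ∧ c + ε ≤ κ / ε := by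
  set ε := min ε₀ (min 1 (κ / (|c| + 1))) with hε
  have hc : 0 < |c| + 1 := by positivity
  have h0 : 0 < ε := by positivity
  refine ⟨ε, h0, min_le_left _ _, ?_⟩
  rw [le_div_iff₀ h0]
  have h1 : ε ≤ 1 := (min_le_right _ _).trans (min_le_left _ _)
  have h2 : ε ≤ κ / (|c| + 1) := (min_le_right _ _).trans (min_le_right _ _)
  rw [le_div_iff₀ hc] at h2
  have := le_abs_self c
  nlinarith

lemma prof_le_left {g p : ℝ → ℝ} {c : ℝ} (hp : IsProf g c p)
    (hg : ∀ w ∈ Icc (0:ℝ) 1, 0 ≤ g w) : ∀ w ∈ Icc (0:ℝ) 1, p w ≤ c * w := by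
  intro w hw
  have hanti : AntitoneOn (fun w => p w - c * w) (Icc 0 1) := by
    have hder : ∀ x ∈ Ioo (0:ℝ) 1, HasDerivAt (fun w => p w - c * w)
      (c - g x / p x - c * 1) x := fun x hx =>
        (hp.der x hx).sub ((hasDerivAt_id x).const_mul c)
    apply antitoneOn_of_deriv_nonpos (convex_Icc 0 1)
    · exact hp.cont.sub (by fun_prop)
    · rw [interior_Icc]
      exact fun x hx => (hder x hx).differentiableAt.differentiableWithinAt
    · rw [interior_Icc]
      intro x hx
      rw [(hder x hx).deriv]
      have := div_nonneg (hg x ⟨hx.1.le, hx.2.le⟩) (hp.pos x hx).le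
      linarith
  have := hanti (left_mem_Icc.2 zero_le_one) hw hw.1
  simp [hp.p0] at this
  exact this

lemma prof_le_right {g p : ℝ → ℝ} {c C : ℝ} (hp : IsProf g c p)
    (hg : ∀ w ∈ Ioo (0:ℝ) 1, g w / p w ≤ C) (hc : 0 ≤ c) :
    ∀ w ∈ Icc (0:ℝ) 1, p w ≤ C * (1 - w) := by
  intro w hw
  have hmono : MonotoneOn (fun w => p w - C * (1 - w)) (Icc 0 1) := by
    have hder : ∀ x ∈ Ioo (0:ℝ) 1, HasDerivAt (fun w => p w - C * (1 - w))
      (c - g x / p x - C * (0 - 1)) x := fun x hx =>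
        (hp.der x hx).sub (((hasDerivAt_const x (1:ℝ)).sub (hasDerivAt_id x)).const_mul C)
    apply monotoneOn_of_deriv_nonneg (convex_Icc 0 1)
    · exact hp.cont.sub (by fun_prop)
    · rw [interior_Icc]
      exact fun x hx => (hder x hx).differentiableAt.differentiableWithinAt
    · rw [interior_Icc]
      intro x hx
      rw [(hder x hx).deriv]
      have := hg x hx
      linarith
  have := hmono hw (right_mem_Icc.2 zero_le_one) hw.2
  simp [hp.p1] at this
  exact this

lemma prof_upper {g p : ℝ → ℝ} {c κ K : ℝ} (hp : IsProf g c p) (hc : 0 ≤ c) (hκ : 0 < κ)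
    (hK : ∀ w ∈ Icc (0:ℝ) 1, g w ≤ K * (w * (1 - w)))
    (hg : ∀ w ∈ Icc (0:ℝ) 1, κ * (w * (1 - w)) ≤ g w) :
    ∃ C, 0 < C ∧ ∀ w ∈ Icc (0:ℝ) 1, p w ≤ C * (w * (1 - w)) := by
  obtain ⟨ε, hε, -, hεc⟩ := exists_eps c hκ zero_lt_one
  have hlow := prof_lower hp hε hεc hg hκ
  have hb : ∀ w ∈ Icc (0:ℝ) 1, 0 ≤ w * (1 - w) := fun w hw =>
    mul_nonneg hw.1 (by linarith [hw.2])
  have hg0 : ∀ w ∈ Icc (0:ℝ) 1, 0 ≤ g w := fun w hw =>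
    (mul_nonneg hκ.le (hb w hw)).trans (hg w hw)
  have hKpos : 0 < K := by
    have h1 := hK (1/2) (by norm_num)
    have h2 := hg (1/2) (by norm_num)
    norm_num at h1 h2
    linarith
  have hl := prof_le_left hp hg0
  have hr := prof_le_right (C := K / ε) hp (by
    intro w hw
    have hpw := hp.pos w hw
    rw [div_le_div_iff₀ hpw hε]
    have h1 := hK w ⟨hw.1.le, hw.2.le⟩
    have h2 := hlow w ⟨hw.1.le, hw.2.le⟩
    nlinarith) hc
  have hKε : 0 < K / ε := by positivity
  refine ⟨2 * (c + K / ε), by positivity, fun w hw => ?_⟩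
  have h1 := hl w hw
  have h2 := hr w hw
  have hw1 : 0 ≤ 1 - w := by linarith [hw.2]
  have hbw := hb w hw
  rcases le_total w (1/2) with h | h
  · have : c * w * (2 * (1 - w) - 1) ≥ 0 :=
      mul_nonneg (mul_nonneg hc hw.1) (by linarith)
    nlinarith [mul_nonneg hKε.le hbw]
  · have : K / ε * (1 - w) * (2 * w - 1) ≥ 0 :=
      mul_nonneg (mul_nonneg hKε.le hw1) (by linarith)
    nlinarith [mul_nonneg hc hbw]

lemma front_strictAnti {g W : ℝ → ℝ} {c : ℝ} (hW : IsFront g c W) : StrictAnti W :=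
  strictAnti_of_deriv_neg hW.2.2.2.2

lemma front_mem {g W : ℝ → ℝ} {c : ℝ} (hW : IsFront g c W) (ξ : ℝ) : W ξ ∈ Ioo (0:ℝ) 1 := by
  have ha := front_strictAnti hW
  have h0 : 0 ≤ W (ξ + 1) := ha.antitone.le_of_tendsto hW.2.2.2.1 _
  have h1 : W (ξ - 1) ≤ 1 := ha.antitone.ge_of_tendsto hW.2.2.1 _
  exact ⟨lt_of_le_of_lt h0 (ha (by linarith)), lt_of_lt_of_le (ha (by linarith)) h1⟩

lemma front_hasDerivAt {g W : ℝ → ℝ} {c : ℝ} (hW : IsFront g c W) (ξ : ℝ) :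
    HasStrictDerivAt W (deriv W ξ) ξ ∧
    HasDerivAt (deriv W) (- c * deriv W ξ - g (W ξ)) ξ := by
  have h1 : HasStrictDerivAt W (deriv W ξ) ξ :=
    (hW.1.contDiffAt).hasStrictDerivAt (by norm_num)
  have h2 : Differentiable ℝ (deriv W) := by
    have : ContDiff ℝ 1 (deriv W) := by
      have := hW.1
      rw [show (2 : WithTop ℕ∞) = 1 + 1 by norm_num, contDiff_succ_iff_deriv] at this
      exact this.2.2
    exact this.differentiable (by norm_num)
  refine ⟨h1, ?_⟩
  have := (h2 ξ).hasDerivAt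
  refine this.congr_deriv ?_
  linarith [hW.2.1 ξ]

lemma front_deriv_bound {g W : ℝ → ℝ} {c : ℝ} (hW : IsFront g c W)
    (hg : ∀ w ∈ Ioo (0:ℝ) 1, 0 < g w) (ξ : ℝ) :
    - ((1 + |c|) * (W ξ - W (ξ + 1))) ≤ deriv W ξ := by
  have ha := front_strictAnti hW
  have hY : Antitone (fun ξ => deriv W ξ + c * W ξ) := by
    have hd : ∀ x, HasDerivAt (fun ξ => deriv W ξ + c * W ξ)
      (- c * deriv W x - g (W x) + c * deriv W x) x := fun x =>
      (front_hasDerivAt hW x).2.add ((front_hasDerivAt hW x).1.hasDerivAt.const_mul c)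
    apply antitone_of_deriv_nonpos (fun x => (hd x).differentiableAt)
    intro x
    rw [(hd x).deriv]
    linarith [hg _ (front_mem hW x)]
  obtain ⟨η, hη, hη'⟩ := exists_hasDerivAt_eq_slope W (deriv W) (show ξ < ξ + 1 by linarith)
    (fun x _ => (front_hasDerivAt hW x).1.hasDerivAt.continuousAt.continuousWithinAt)
    (fun x _ => (front_hasDerivAt hW x).1.hasDerivAt)
  have h1 := hY hη.1.le
  simp only at h1
  have h2 : W η < W ξ := ha hη.1
  have h3 : W (ξ + 1) < W η := ha hη.2
  have h4 : deriv W η = W (ξ + 1) - W ξ := by rw [hη']; simp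
  have h5 : c * (W ξ - W η) ≤ |c| * (W ξ - W (ξ + 1)) := by
    have := le_abs_self c
    have := abs_nonneg c
    nlinarith
  nlinarith

lemma front_deriv_tendsto {g W : ℝ → ℝ} {c : ℝ} (hW : IsFront g c W)
    (hg : ∀ w ∈ Ioo (0:ℝ) 1, 0 < g w) :
    Tendsto (deriv W) atTop (nhds 0) ∧ Tendsto (deriv W) atBot (nhds 0) := by
  have hb := front_deriv_bound hW hg
  constructor
  · have h1 : Tendsto (fun ξ => - ((1 + |c|) * (W ξ - W (ξ + 1)))) atTop (nhds 0) := by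
      have := ((hW.2.2.2.1.sub (hW.2.2.2.1.comp
        (tendsto_atTop_add_const_right atTop (1:ℝ) tendsto_id))).const_mul (1 + |c|)).neg
      simpa using this
    exact tendsto_of_tendsto_of_tendsto_of_le_of_le h1 tendsto_const_nhds hb
      (fun ξ => (hW.2.2.2.2 ξ).le)
  · have h1 : Tendsto (fun ξ => - ((1 + |c|) * (W ξ - W (ξ + 1)))) atBot (nhds 0) := by
      have := ((hW.2.2.1.sub (hW.2.2.1.comp
        (tendsto_atBot_add_const_right atBot (1:ℝ) tendsto_id))).const_mul (1 + |c|)).neg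
      simpa using this
    exact tendsto_of_tendsto_of_tendsto_of_le_of_le h1 tendsto_const_nhds hb
      (fun ξ => (hW.2.2.2.2 ξ).le)

lemma front_surj {g W : ℝ → ℝ} {c : ℝ} (hW : IsFront g c W) {w : ℝ} (hw : w ∈ Ioo (0:ℝ) 1) :
    ∃ ξ, W ξ = w := by
  obtain ⟨a, ha⟩ := (hW.2.2.1.eventually (lt_mem_nhds hw.2)).exists
  obtain ⟨b, hb⟩ := (hW.2.2.2.1.eventually (gt_mem_nhds hw.1)).exists
  exact mem_range_of_exists_le_of_exists_ge hW.1.continuous ⟨b, hb.le⟩ ⟨a, ha.le⟩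

/-- From a front to a phase-plane profile. -/
lemma front_to_prof {g W : ℝ → ℝ} {c : ℝ} (hW : IsFront g c W)
    (hg : ∀ w ∈ Ioo (0:ℝ) 1, 0 < g w) :
    ∃ p, IsProf g c p ∧ ∀ ξ, deriv W ξ = - p (W ξ) := by
  classical
  have ha := front_strictAnti hW
  set V := Function.invFun W with hV
  have hVW : ∀ ξ, V (W ξ) = ξ := Function.leftInverse_invFun ha.injective
  set p : ℝ → ℝ := fun w => if w ∈ Ioo (0:ℝ) 1 then - deriv W (V w) else 0 with hp
  have hpW : ∀ ξ, p (W ξ) = - deriv W ξ := by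
    intro ξ
    simp only [hp, if_pos (front_mem hW ξ), hVW]
  have hpos : ∀ w ∈ Ioo (0:ℝ) 1, 0 < p w := by
    intro w hw
    obtain ⟨ξ, rfl⟩ := front_surj hW hw
    rw [hpW]; linarith [hW.2.2.2.2 ξ]
  have hder : ∀ w ∈ Ioo (0:ℝ) 1, HasDerivAt p (c - g w / p w) w := by
    intro w hw
    obtain ⟨ξ, rfl⟩ := front_surj hW hw
    obtain ⟨h1, h2⟩ := front_hasDerivAt hW ξ
    have hne := (hW.2.2.2.2 ξ).ne
    have h3 : HasDerivAt V (deriv W ξ)⁻¹ (W ξ) :=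
      (h1.to_local_left_inverse hne (Eventually.of_forall hVW)).hasDerivAt
    have h4 : HasDerivAt (fun w => - deriv W (V w))
        (-((- c * deriv W ξ - g (W ξ)) * (deriv W ξ)⁻¹)) (W ξ) := by
      have h2' : HasDerivAt (deriv W) (- c * deriv W ξ - g (W ξ)) (V (W ξ)) := by
        rw [hVW]; exact h2
      exact (h2'.comp (W ξ) h3).neg
    have h5 : p =ᶠ[nhds (W ξ)] (fun w => - deriv W (V w)) := by
      filter_upwards [isOpen_Ioo.mem_nhds hw] with x hx
      simp only [hp, if_pos hx]
    rw [hpW]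
    refine (h4.congr_of_eventuallyEq h5).congr_deriv ?_
    field_simp
    ring
  have hp0 : p 0 = 0 := by simp [hp]
  have hp1 : p 1 = 0 := by simp [hp]
  obtain ⟨ht, hbt⟩ := front_deriv_tendsto hW hg
  refine ⟨p, ⟨?_, hp0, hp1, hpos, hder⟩, fun ξ => by rw [hpW]; ring⟩
  intro w hw
  rcases eq_or_lt_of_le hw.1 with h | h
  · -- w = 0
    subst h
    rw [ContinuousWithinAt, hp0, Metric.tendsto_nhds]
    intro ε hε
    obtain ⟨X, hX⟩ := (eventually_atTop.1 (Metric.tendsto_nhds.1 ht ε hε))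
    have : Iio (W X) ∈ nhdsWithin (0:ℝ) (Icc 0 1) :=
      mem_nhdsWithin_of_mem_nhds (Iio_mem_nhds (front_mem hW X).1)
    filter_upwards [this, self_mem_nhdsWithin] with x hx hx1
    by_cases hx2 : x ∈ Ioo (0:ℝ) 1
    · obtain ⟨ξ, rfl⟩ := front_surj hW hx2
      have := hX ξ (ha.lt_iff_gt.1 hx).le
      rw [hpW]
      simpa using this
    · have : p x = 0 := by simp only [hp]; exact if_neg hx2
      rw [this]; simpa using hε
  rcases eq_or_lt_of_le hw.2 with h' | h'
  · subst h'
    rw [ContinuousWithinAt, hp1, Metric.tendsto_nhds]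
    intro ε hε
    obtain ⟨X, hX⟩ := (eventually_atBot.1 (Metric.tendsto_nhds.1 hbt ε hε))
    have : Ioi (W X) ∈ nhdsWithin (1:ℝ) (Icc 0 1) :=
      mem_nhdsWithin_of_mem_nhds (Ioi_mem_nhds (front_mem hW X).2)
    filter_upwards [this, self_mem_nhdsWithin] with x hx hx1
    by_cases hx2 : x ∈ Ioo (0:ℝ) 1
    · obtain ⟨ξ, rfl⟩ := front_surj hW hx2
      have := hX ξ (ha.lt_iff_gt.1 hx).le
      rw [hpW]
      simpa using this
    · have : p x = 0 := by simp only [hp]; exact if_neg hx2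
      rw [this]; simpa using hε
  · exact (hder w ⟨h, h'⟩).continuousAt.continuousWithinAt

/-- From a phase-plane profile to a front. -/
lemma prof_to_front {g p : ℝ → ℝ} {c C : ℝ} (hp : IsProf g c p)
    (hgc : ContinuousOn g (Icc 0 1)) (hC : 0 < C)
    (hpC : ∀ w ∈ Icc (0:ℝ) 1, p w ≤ C * (w * (1 - w))) : ∃ W, IsFront g c W := by
  let σ := Real.sigmoid
  have hσ : ∀ y, σ y ∈ Ioo (0:ℝ) 1 := fun y => ⟨Real.sigmoid_pos y, Real.sigmoid_lt_one y⟩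
  have hσ' : ∀ y, σ y ∈ Icc (0:ℝ) 1 := fun y => ⟨(hσ y).1.le, (hσ y).2.le⟩
  have hσc : Continuous σ := continuous_sigmoid
  have hσb : ∀ y, 0 < σ y * (1 - σ y) := fun y => mul_pos (hσ y).1 (by linarith [(hσ y).2])
  have hpσ : ∀ y, 0 < p (σ y) := fun y => hp.pos _ (hσ y)
  let h : ℝ → ℝ := fun y => -(σ y * (1 - σ y) / p (σ y))
  have hhc : Continuous h := by
    have hpc : Continuous (fun y => p (σ y)) :=
      hp.cont.comp_continuous hσc hσ'
    exact ((hσc.mul (continuous_const.sub hσc)).div hpc (fun y => (hpσ y).ne')).neg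
  have hhneg : ∀ y, h y < 0 := fun y => neg_lt_zero.2 (div_pos (hσb y) (hpσ y))
  have hhC : ∀ y, h y ≤ - (1 / C) := by
    intro y
    simp only [h]
    apply neg_le_neg
    rw [div_le_div_iff₀ hC (hpσ y)]
    linarith [hpC _ (hσ' y)]
  let T : ℝ → ℝ := fun y => ∫ t in (0:ℝ)..y, h t
  have hT : ∀ y, HasDerivAt T (h y) y := fun y => hhc.integral_hasStrictDerivAt 0 y |>.hasDerivAt
  have hTs : ∀ y, HasStrictDerivAt T (h y) y := fun y => hhc.integral_hasStrictDerivAt 0 y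
  have hTa : StrictAnti T := strictAnti_of_deriv_neg (fun y => by rw [(hT y).deriv]; exact hhneg y)
  have hTc : Continuous T := continuous_iff_continuousAt.2 fun y => (hT y).continuousAt
  have hA : Antitone (fun y => T y + 1 / C * y) := by
    have hd : ∀ y, HasDerivAt (fun y => T y + 1 / C * y) (h y + 1 / C * 1) y := fun y =>
      (hT y).add ((hasDerivAt_id y).const_mul _)
    apply antitone_of_deriv_nonpos (fun x => (hd x).differentiableAt)
    intro x
    rw [(hd x).deriv]
    linarith [hhC x]
  have hT0 : T 0 = 0 := by simp [T]
  have hCi : 0 < 1 / C := by positivity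
  have hTop : Tendsto T atTop atBot := by
    have h1 : Tendsto (fun y => -(1 / C * y)) atTop atBot :=
      tendsto_neg_atTop_atBot.comp (tendsto_id.const_mul_atTop hCi)
    apply tendsto_atBot_mono' _ _ h1
    filter_upwards [eventually_ge_atTop 0] with y hy
    have := hA hy
    simp [hT0] at this
    simp
    linarith
  have hBot : Tendsto T atBot atTop := by
    have h1 : Tendsto (fun y => -(1 / C * y)) atBot atTop :=
      tendsto_neg_atBot_atTop.comp (tendsto_id.const_mul_atBot hCi)
    apply tendsto_atTop_mono' _ _ h1
    filter_upwards [eventually_le_atBot 0] with y hy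
    have := hA hy
    simp [hT0] at this
    simp
    linarith
  have hTsurj : Function.Surjective T := hTc.surjective' hBot hTop
  set V := Function.invFun T with hV
  have hVT : ∀ y, V (T y) = y := Function.leftInverse_invFun hTa.injective
  have hTV : ∀ y, T (V y) = y := Function.rightInverse_invFun hTsurj
  have hVd : ∀ ξ, HasDerivAt V (h (V ξ))⁻¹ ξ := by
    intro ξ
    have := ((hTs (V ξ)).to_local_left_inverse (hhneg _).ne (Eventually.of_forall hVT)).hasDerivAt
    rwa [hTV] at this
  have hVa : StrictAnti V := by
    apply strictAnti_of_deriv_neg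
    intro y
    rw [(hVd y).deriv]
    exact inv_lt_zero.2 (hhneg _)
  have hVtop : Tendsto V atTop atBot := by
    apply tendsto_atTop_atBot_of_antitone hVa.antitone
    intro b
    exact ⟨T b, by rw [hVT]⟩
  have hVbot : Tendsto V atBot atTop := by
    apply tendsto_atBot_atTop_of_antitone hVa.antitone
    intro b
    exact ⟨T b, by rw [hVT]⟩
  let W : ℝ → ℝ := fun ξ => σ (V ξ)
  have hW : ∀ ξ, HasDerivAt W (- p (W ξ)) ξ := by
    intro ξ
    have h1 : HasDerivAt σ (σ (V ξ) * (1 - σ (V ξ))) (V ξ) := Real.hasDerivAt_sigmoid _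
    refine (h1.comp ξ (hVd ξ)).congr_deriv ?_
    have := (hσb (V ξ)).ne'
    have := (hpσ (V ξ)).ne'
    simp only [h, W, inv_neg, inv_div]
    rw [mul_neg, mul_div_assoc', mul_div_cancel_left₀ _ (hσb (V ξ)).ne']
  have hWc : Continuous W := continuous_iff_continuousAt.2 fun y => (hW y).continuousAt
  have hWd : deriv W = fun ξ => - p (W ξ) := funext fun ξ => (hW ξ).deriv
  have hW2 : ∀ ξ, HasDerivAt (deriv W) (c * p (W ξ) - g (W ξ)) ξ := by
    intro ξ
    rw [hWd]
    have := ((hp.der (W ξ) (hσ _)).comp ξ (hW ξ)).neg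
    refine this.congr_deriv ?_
    have : p (W ξ) ≠ 0 := (hpσ (V ξ)).ne'
    field_simp
  refine ⟨W, ?_, ?_, ?_, ?_, ?_⟩
  · rw [show (2 : WithTop ℕ∞) = 1 + 1 by norm_num, contDiff_succ_iff_deriv]
    refine ⟨fun ξ => (hW ξ).differentiableAt, by simp, ?_⟩
    rw [contDiff_one_iff_deriv]
    refine ⟨fun ξ => (hW2 ξ).differentiableAt, ?_⟩
    rw [show deriv (deriv W) = fun ξ => c * p (W ξ) - g (W ξ) from funext fun ξ => (hW2 ξ).deriv]
    have h1 : Continuous (fun y => p (W y)) := hp.cont.comp_continuous hWc (fun y => hσ' _)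
    have h2 : Continuous (fun y => g (W y)) := hgc.comp_continuous hWc (fun y => hσ' _)
    exact (h1.const_mul c).sub h2
  · intro ξ
    rw [(hW2 ξ).deriv, (hW ξ).deriv]; ring
  · exact Real.tendsto_sigmoid_atTop.comp hVbot
  · exact Real.tendsto_sigmoid_atBot.comp hVtop
  · intro ξ
    rw [(hW ξ).deriv]
    linarith [hpσ (V ξ)]

/-- Truncated ODE: global existence on a compact subinterval of `(0,1)`. -/
lemma trunc_exists {g : ℝ → ℝ} {c K ε a b : ℝ}
    (hgc : ContinuousOn g (Icc 0 1)) (hg0 : ∀ w ∈ Icc (0:ℝ) 1, 0 ≤ g w)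
    (hK : ∀ w ∈ Icc (0:ℝ) 1, g w ≤ K * (w * (1 - w))) (hK0 : 0 < K) (hε : 0 < ε)
    (ha : 0 < a) (hab : a ≤ b) (hb : b < 1) :
    ∃ P : ℝ → ℝ, P b = ε * (b * (1 - b)) ∧ ∀ t ∈ Icc a b,
      HasDerivWithinAt P (c - g t / max (P t) (ε * (t * (1 - t)))) (Icc a b) t := by
  have hIcc : ∀ t ∈ Icc a b, t ∈ Icc (0:ℝ) 1 := fun t ht =>
    ⟨ha.le.trans ht.1, ht.2.trans hb.le⟩
  have hbpos : ∀ t ∈ Icc a b, 0 < t * (1 - t) := fun t ht =>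
    mul_pos (ha.trans_le ht.1) (by linarith [ht.2])
  have hlb : ∀ t ∈ Icc a b, a * (1 - b) ≤ t * (1 - t) := fun t ht =>
    mul_le_mul ht.1 (by linarith [ht.2]) (by linarith) (ha.le.trans ht.1)
  have hab' : 0 < a * (1 - b) := mul_pos ha (by linarith)
  let L : NNReal := ⟨|c| + K / ε, by positivity⟩
  let KK : NNReal := ⟨K / (ε ^ 2 * (a * (1 - b))), by positivity⟩
  have hmax : ∀ t ∈ Icc a b, ∀ x : ℝ, 0 < max x (ε * (t * (1 - t))) := fun t ht x =>
    lt_max_of_lt_right (mul_pos hε (hbpos t ht))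
  have hpl : IsPicardLindelof (fun t x => c - g t / max x (ε * (t * (1 - t))))
      (⟨b, hab, le_rfl⟩ : Icc a b) (ε * (b * (1 - b))) L 0 L KK := by
    refine ⟨?_, ?_, ?_, ?_⟩
    · intro t ht
      apply LipschitzOnWith.of_dist_le_mul
      intro x _ y _
      rw [Real.dist_eq, Real.dist_eq]
      set m := ε * (t * (1 - t)) with hm
      have hmpos : 0 < m := mul_pos hε (hbpos t ht)
      have hx := hmax t ht x
      have hy := hmax t ht y
      have h1 : c - g t / max x m - (c - g t / max y m)
          = g t * (max x m - max y m) / (max x m * max y m) := by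
        field_simp
        ring
      rw [h1, abs_div, abs_mul, abs_of_nonneg (hg0 t (hIcc t ht)), abs_of_pos (mul_pos hx hy)]
      have h2 : |max x m - max y m| ≤ |x - y| := by
        have := abs_max_sub_max_le_max x m y m
        simpa using this
      have h3 : m * m ≤ max x m * max y m :=
        mul_le_mul (le_max_right _ _) (le_max_right _ _) hmpos.le hx.le
      have h4 : g t / (m * m) ≤ K / (ε ^ 2 * (a * (1 - b))) := by
        have h5 := hK t (hIcc t ht)
        have h6 := hlb t ht
        rw [div_le_div_iff₀ (by positivity) (by positivity), hm]
        have h7 : g t * (a * (1 - b)) ≤ K * (t * (1 - t)) * (t * (1 - t)) :=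
          mul_le_mul h5 h6 hab'.le (by have := hbpos t ht; positivity)
        nlinarith [sq_nonneg ε, mul_le_mul_of_nonneg_left h7 (sq_nonneg ε)]
      calc g t * |max x m - max y m| / (max x m * max y m)
          ≤ g t * |x - y| / (m * m) := by
            apply div_le_div₀ _ _ (by positivity) h3
            · exact mul_nonneg (hg0 t (hIcc t ht)) (abs_nonneg _)
            · exact mul_le_mul_of_nonneg_left h2 (hg0 t (hIcc t ht))
        _ = g t / (m * m) * |x - y| := by ring
        _ ≤ _ := mul_le_mul_of_nonneg_right h4 (abs_nonneg _)
    · intro x _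
      refine continuousOn_const.sub ((hgc.mono hIcc).div ?_ (fun t ht => (hmax t ht x).ne'))
      fun_prop
    · intro t ht x _
      rw [Real.norm_eq_abs]
      have h1 : g t / max x (ε * (t * (1 - t))) ≤ K / ε := by
        rw [div_le_div_iff₀ (hmax t ht x) hε]
        have := hK t (hIcc t ht)
        have h2 := le_max_right x (ε * (t * (1 - t)))
        nlinarith
      have h2 : 0 ≤ g t / max x (ε * (t * (1 - t))) :=
        div_nonneg (hg0 t (hIcc t ht)) (hmax t ht x).le
      change |_| ≤ |c| + K / ε
      calc _ ≤ |c| + |g t / max x (ε * (t * (1 - t)))| := abs_sub _ _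
        _ ≤ _ := by rw [abs_of_nonneg h2]; linarith
    · simp only [sub_self, NNReal.coe_zero, sub_zero]
      have : max (0:ℝ) (b - a) ≤ 1 := max_le (by norm_num) (by linarith)
      exact mul_le_of_le_one_right L.2 this
  obtain ⟨P, hP, hPderiv⟩ := hpl.exists_eq_forall_mem_Icc_hasDerivWithinAt₀
  exact ⟨P, hP, hPderiv⟩

/-- Existence of a profile below a (piecewise) supersolution. -/
lemma exists_prof {g q1 q1' q2 q2' : ℝ → ℝ} {c κ K ε₀ w0 : ℝ}
    (hgc : ContinuousOn g (Icc 0 1)) (hκ : 0 < κ)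
    (hg : ∀ w ∈ Icc (0:ℝ) 1, κ * (w * (1 - w)) ≤ g w)
    (hK : ∀ w ∈ Icc (0:ℝ) 1, g w ≤ K * (w * (1 - w)))
    (hε₀ : 0 < ε₀)
    (hq1c : ContinuousOn q1 (Icc 0 1)) (hq11 : q1 1 = 0)
    (hq1l : ∀ w ∈ Icc (0:ℝ) 1, ε₀ * (w * (1 - w)) ≤ q1 w)
    (hq1d : ∀ w ∈ Ioo (0:ℝ) 1, HasDerivAt q1 (q1' w) w ∧ q1' w ≤ c - g w / q1 w)
    (hw0 : w0 ∈ Ioo (0:ℝ) 1)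
    (hq2c : ContinuousOn q2 (Icc 0 w0)) (hq20 : q2 0 = 0)
    (hq2l : ∀ w ∈ Icc (0:ℝ) w0, ε₀ * (w * (1 - w)) ≤ q2 w)
    (hq2d : ∀ w ∈ Ioo (0:ℝ) w0, HasDerivAt q2 (q2' w) w ∧ q2' w ≤ c - g w / q2 w)
    (h12 : q1 w0 ≤ q2 w0) : ∃ p, IsProf g c p := by
  classical
  obtain ⟨ε, hε, hεε₀, hεc⟩ := exists_eps c hκ hε₀
  have hb : ∀ w ∈ Icc (0:ℝ) 1, 0 ≤ w * (1 - w) := fun w hw =>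
    mul_nonneg hw.1 (by linarith [hw.2])
  have hb' : ∀ w ∈ Ioo (0:ℝ) 1, 0 < w * (1 - w) := fun w hw =>
    mul_pos hw.1 (by linarith [hw.2])
  have hg0 : ∀ w ∈ Icc (0:ℝ) 1, 0 ≤ g w := fun w hw =>
    (mul_nonneg hκ.le (hb w hw)).trans (hg w hw)
  have hK0 : 0 < K := by
    have h1 := hK (1/2) (by norm_num)
    have h2 := hg (1/2) (by norm_num)
    norm_num at h1 h2
    linarith
  let m : ℝ → ℝ := fun w => ε * (w * (1 - w))
  have hmpos : ∀ w ∈ Ioo (0:ℝ) 1, 0 < m w := fun w hw => mul_pos hε (hb' w hw)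
  have hmd : ∀ x, HasDerivAt m (ε * (1 * (1 - x) + x * (0 - 1))) x := fun x =>
    ((hasDerivAt_id x).mul ((hasDerivAt_const x (1:ℝ)).sub (hasDerivAt_id x))).const_mul ε
  have hmc : Continuous m := by fun_prop
  let F : ℝ → ℝ → ℝ := fun t x => c - g t / max x (m t)
  have hFmono : ∀ t ∈ Ioo (0:ℝ) 1, ∀ x y, x ≤ y → F t x ≤ F t y := by
    intro t ht x y hxy
    simp only [F]
    have := hmpos t ht
    have h1 : max x (m t) ≤ max y (m t) := max_le_max_right _ hxy
    have h2 : 0 < max x (m t) := lt_max_of_lt_right this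
    have := div_le_div_of_nonneg_left (hg0 t ⟨ht.1.le, ht.2.le⟩) h2 h1
    linarith
  let A : ℕ → ℝ := fun n => w0 / (n + 2)
  let B : ℕ → ℝ := fun n => 1 - (1 - w0) / (n + 2)
  have hw1 : 0 < 1 - w0 := by linarith [hw0.2]
  have hA0 : ∀ n, 0 < A n := fun n => by have := hw0.1; positivity
  have hB1 : ∀ n, B n < 1 := fun n => by
    have : 0 < (1 - w0) / ((n:ℝ) + 2) := by positivity
    simp only [B]; linarith
  have hAw : ∀ n, A n ≤ w0 := fun n => by
    simp only [A]
    apply div_le_self hw0.1.le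
    have : (0:ℝ) ≤ n := Nat.cast_nonneg n
    linarith
  have hBw : ∀ n, w0 ≤ B n := fun n => by
    have : (1 - w0) / ((n:ℝ) + 2) ≤ 1 - w0 := by
      apply div_le_self hw1.le
      have : (0:ℝ) ≤ n := Nat.cast_nonneg n
      linarith
    simp only [B]; linarith
  have hAn : ∀ n, A (n+1) ≤ A n := fun n => by
    simp only [A]; push_cast
    apply div_le_div_of_nonneg_left hw0.1.le (by positivity) (by linarith)
  have hBn : ∀ n, B n ≤ B (n+1) := fun n => by
    simp only [B]; push_cast
    have : (1 - w0) / ((n:ℝ) + 1 + 2) ≤ (1 - w0) / (n + 2) :=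
      div_le_div_of_nonneg_left hw1.le (by positivity) (by linarith)
    linarith
  have hIcc : ∀ n, ∀ t ∈ Icc (A n) (B n), t ∈ Ioo (0:ℝ) 1 := fun n t ht =>
    ⟨(hA0 n).trans_le ht.1, ht.2.trans_lt (hB1 n)⟩
  choose R hRb hRd using fun n => trunc_exists (c := c) hgc hg0 hK hK0 hε (hA0 n)
    ((hAw n).trans (hBw n)) (hB1 n)
  have hRc : ∀ n, ContinuousOn (R n) (Icc (A n) (B n)) := fun n t ht =>
    (hRd n t ht).continuousWithinAt
  have hRd' : ∀ n, ∀ t ∈ Ioo (A n) (B n), HasDerivAt (R n) (F t (R n t)) t := fun n t ht =>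
    (hRd n t ⟨ht.1.le, ht.2.le⟩).hasDerivAt (Icc_mem_nhds ht.1 ht.2)
  have hmR : ∀ n, ∀ t ∈ Icc (A n) (B n), m t ≤ R n t := by
    intro n t ht
    have := comp_lemma (D := fun t => m t - R n t) (hmc.continuousOn.sub (hRc n))
      (by simp [hRb, m]) ?_ t ht
    · simpa using this
    · intro x hx hpos
      refine ⟨_, ?_, (hmd x).sub (hRd' n x hx)⟩
      have hx1 := hIcc n x ⟨hx.1.le, hx.2.le⟩
      have h1 : max (R n x) (m x) = m x := max_eq_right (by linarith)
      simp only [F, h1]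
      have h2 : κ / ε ≤ g x / m x := by
        rw [div_le_div_iff₀ hε (hmpos x hx1)]
        have := hg x ⟨hx1.1.le, hx1.2.le⟩
        simp only [m]
        nlinarith
      have : 0 ≤ ε * (1 - x) := mul_nonneg hε.le (by linarith [hx1.2])
      nlinarith
  -- generic upper barrier
  have hup : ∀ n, ∀ b ∈ Icc (A n) (B n), ∀ q q' : ℝ → ℝ, ContinuousOn q (Icc (A n) b) →
      (∀ w ∈ Ioo (A n) b, ε₀ * (w * (1 - w)) ≤ q w) →
      (∀ w ∈ Ioo (A n) b, HasDerivAt q (q' w) w ∧ q' w ≤ c - g w / q w) →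
      R n b ≤ q b → ∀ w ∈ Icc (A n) b, R n w ≤ q w := by
    intro n b hbn q q' hqc hql hqd hqb w hw
    have := comp_lemma (D := fun t => R n t - q t)
      (((hRc n).mono (Icc_subset_Icc_right hbn.2)).sub hqc) (by simpa using hqb) ?_ w hw
    · simpa using this
    · intro x hx hpos
      have hx' : x ∈ Ioo (A n) (B n) := ⟨hx.1, hx.2.trans_le hbn.2⟩
      refine ⟨_, ?_, (hRd' n x hx').sub (hqd x hx).1⟩
      have hx1 := hIcc n x ⟨hx'.1.le, hx'.2.le⟩
      have h2 := hql x hx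
      have hbx := hb' x hx1
      have hq0 : 0 < q x := lt_of_lt_of_le (mul_pos hε₀ hbx) h2
      have hmq : m x ≤ q x := (mul_le_mul_of_nonneg_right hεε₀ hbx.le).trans h2
      have h1 : max (R n x) (m x) = R n x := max_eq_left (by linarith)
      simp only [F, h1]
      have h3 := div_le_div_of_nonneg_left (hg0 x ⟨hx1.1.le, hx1.2.le⟩) hq0
        (show q x ≤ R n x by linarith)
      linarith [(hqd x hx).2]
  have hR1 : ∀ n, ∀ t ∈ Icc (A n) (B n), R n t ≤ q1 t := by
    intro n
    have hBmem : B n ∈ Icc (A n) (B n) := ⟨(hAw n).trans (hBw n), le_rfl⟩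
    apply hup n (B n) hBmem q1 q1'
    · exact hq1c.mono (fun t ht => Ioo_subset_Icc_self (hIcc n t ht))
    · exact fun w hw => hq1l w (Ioo_subset_Icc_self (hIcc n w (Ioo_subset_Icc_self hw)))
    · exact fun w hw => hq1d w (hIcc n w (Ioo_subset_Icc_self hw))
    · rw [hRb]
      have h1 := Ioo_subset_Icc_self (hIcc n _ hBmem)
      exact (mul_le_mul_of_nonneg_right hεε₀ (hb _ h1)).trans (hq1l _ h1)
  have hR2 : ∀ n, ∀ t ∈ Icc (A n) w0, R n t ≤ q2 t := by
    intro n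
    have hwmem : w0 ∈ Icc (A n) (B n) := ⟨hAw n, hBw n⟩
    apply hup n w0 hwmem q2 q2'
    · exact hq2c.mono (Icc_subset_Icc_left (hA0 n).le)
    · exact fun w hw => hq2l w ⟨(hA0 n).le.trans hw.1.le, hw.2.le⟩
    · exact fun w hw => hq2d w ⟨(hA0 n).trans hw.1, hw.2⟩
    · exact (hR1 n w0 hwmem).trans h12
  have hRmono : ∀ n, ∀ t ∈ Icc (A n) (B n), R n t ≤ R (n+1) t := by
    intro n t ht
    have hsub : ∀ t ∈ Icc (A n) (B n), t ∈ Icc (A (n+1)) (B (n+1)) := fun t ht =>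
      ⟨(hAn n).trans ht.1, ht.2.trans (hBn n)⟩
    have hBmem : B n ∈ Icc (A n) (B n) := ⟨(hAw n).trans (hBw n), le_rfl⟩
    have := comp_lemma (D := fun t => R n t - R (n+1) t)
      ((hRc n).sub ((hRc (n+1)).mono hsub)) ?_ ?_ t ht
    · simpa using this
    · have := hmR (n+1) (B n) (hsub _ hBmem)
      simp only [hRb n]
      simp only [m] at this
      linarith
    · intro x hx hpos
      have hx' : x ∈ Ioo (A (n+1)) (B (n+1)) :=
        ⟨(hAn n).trans_lt hx.1, hx.2.trans_le (hBn n)⟩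
      refine ⟨_, ?_, (hRd' n x hx).sub (hRd' (n+1) x hx')⟩
      have := hFmono x (hIcc n x (Ioo_subset_Icc_self hx)) _ _ (show R (n+1) x ≤ R n x by linarith)
      linarith
  -- extended sequence
  let Q : ℕ → ℝ → ℝ := fun n t => if t ∈ Icc (A n) (B n) then R n t else m t
  have hQm : ∀ n t, m t ≤ Q n t := by
    intro n t
    simp only [Q]
    split_ifs with h
    · exact hmR n t h
    · exact le_rfl
  have hQmono : ∀ t, Monotone (fun n => Q n t) := by
    intro t
    apply monotone_nat_of_le_succ
    intro n
    by_cases h : t ∈ Icc (A n) (B n)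
    · have h' : t ∈ Icc (A (n+1)) (B (n+1)) := ⟨(hAn n).trans h.1, h.2.trans (hBn n)⟩
      simp only [Q, if_pos h, if_pos h']
      exact hRmono n t h
    · simp only [Q, if_neg h]
      exact hQm (n+1) t
  have hQ1 : ∀ n, ∀ t ∈ Icc (0:ℝ) 1, Q n t ≤ q1 t := by
    intro n t ht
    simp only [Q]
    split_ifs with h
    · exact hR1 n t h
    · exact (mul_le_mul_of_nonneg_right hεε₀ (hb _ ht)).trans (hq1l _ ht)
  have hQ2 : ∀ n, ∀ t ∈ Icc (0:ℝ) w0, Q n t ≤ q2 t := by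
    intro n t ht
    simp only [Q]
    split_ifs with h
    · exact hR2 n t ⟨h.1, ht.2⟩
    · exact (mul_le_mul_of_nonneg_right hεε₀ (hb _ ⟨ht.1, ht.2.trans hw0.2.le⟩)).trans (hq2l _ ht)
  let P : ℝ → ℝ := fun t => ⨆ n, Q n t
  have hbdd : ∀ t ∈ Icc (0:ℝ) 1, BddAbove (range fun n => Q n t) := by
    intro t ht
    exact ⟨q1 t, by rintro _ ⟨n, rfl⟩; exact hQ1 n t ht⟩
  have hPlim : ∀ t ∈ Icc (0:ℝ) 1, Tendsto (fun n => Q n t) atTop (nhds (P t)) := fun t ht =>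
    tendsto_atTop_ciSup (hQmono t) (hbdd t ht)
  have hPm : ∀ t ∈ Icc (0:ℝ) 1, m t ≤ P t := fun t ht =>
    (hQm 0 t).trans (le_ciSup (hbdd t ht) 0)
  have hP1 : ∀ t ∈ Icc (0:ℝ) 1, P t ≤ q1 t := fun t ht => ciSup_le fun n => hQ1 n t ht
  have hP2 : ∀ t ∈ Icc (0:ℝ) w0, P t ≤ q2 t := fun t ht => ciSup_le fun n => hQ2 n t ht
  have hPpos : ∀ t ∈ Ioo (0:ℝ) 1, 0 < P t := fun t ht =>
    (hmpos t ht).trans_le (hPm t (Ioo_subset_Icc_self ht))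
  -- bound for F
  let L : ℝ := |c| + K / ε
  have hFL : ∀ t ∈ Ioo (0:ℝ) 1, ∀ x, |F t x| ≤ L := by
    intro t ht x
    have hmx : 0 < max x (m t) := lt_max_of_lt_right (hmpos t ht)
    have h1 : g t / max x (m t) ≤ K / ε := by
      rw [div_le_div_iff₀ hmx hε]
      have := hK t (Ioo_subset_Icc_self ht)
      have h2 : ε * (t * (1 - t)) ≤ max x (m t) := le_max_right x (m t)
      nlinarith
    have h2 : 0 ≤ g t / max x (m t) := div_nonneg (hg0 t (Ioo_subset_Icc_self ht)) hmx.le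
    calc |F t x| ≤ |c| + |g t / max x (m t)| := abs_sub _ _
      _ ≤ _ := by rw [abs_of_nonneg h2]; simp only [L]; linarith
  -- eventually inside
  have hAlim : Tendsto A atTop (nhds 0) :=
    tendsto_const_nhds.div_atTop (tendsto_atTop_add_const_right _ _ tendsto_natCast_atTop_atTop)
  have hBlim : Tendsto B atTop (nhds 1) := by
    have : Tendsto (fun n : ℕ => (1 - w0) / ((n:ℝ) + 2)) atTop (nhds 0) :=
      tendsto_const_nhds.div_atTop (tendsto_atTop_add_const_right _ _ tendsto_natCast_atTop_atTop)
    simpa using this.const_sub 1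
  have hint : ∀ x ∈ Ioo (0:ℝ) 1, ∀ y ∈ Ioo (0:ℝ) 1, x ≤ y →
      P y - P x = ∫ t in x..y, F t (P t) := by
    intro x hx y hy hxy
    have hev : ∀ᶠ n in atTop, A n < x ∧ y < B n :=
      (hAlim.eventually (gt_mem_nhds hx.1)).and (hBlim.eventually (lt_mem_nhds hy.2))
    have hFR : ∀ n, A n < x → y < B n →
        ContinuousOn (fun t => F t (Q n t)) (Icc x y) := by
      intro n h1 h2
      have hsub : ∀ t ∈ Icc x y, t ∈ Icc (A n) (B n) := fun t ht =>
        ⟨h1.le.trans ht.1, ht.2.trans h2.le⟩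
      have hQc : ContinuousOn (Q n) (Icc x y) :=
        ((hRc n).mono hsub).congr (fun t ht => if_pos (hsub t ht))
      have hsub' : ∀ t ∈ Icc x y, t ∈ Ioo (0:ℝ) 1 := fun t ht => hIcc n t (hsub t ht)
      refine continuousOn_const.sub ((hgc.mono fun t ht =>
        Ioo_subset_Icc_self (hsub' t ht)).div (hQc.sup' hmc.continuousOn) ?_)
      intro t ht
      exact (lt_max_of_lt_right (hmpos t (hsub' t ht))).ne'
    have hQint : ∀ᶠ n in atTop, ∫ t in x..y, F t (Q n t) = Q n y - Q n x := by
      filter_upwards [hev] with n hn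
      have hsub : ∀ t ∈ Icc x y, t ∈ Ioo (A n) (B n) := fun t ht =>
        ⟨hn.1.trans_le ht.1, ht.2.trans_lt hn.2⟩
      apply intervalIntegral.integral_eq_sub_of_hasDerivAt
      · intro t ht
        rw [uIcc_of_le hxy] at ht
        have h1 := hsub t ht
        have h2 : Q n t = R n t := if_pos (Ioo_subset_Icc_self h1)
        rw [h2]
        refine (hRd' n t h1).congr_of_eventuallyEq ?_
        filter_upwards [Ioo_mem_nhds h1.1 h1.2] with z hz
        exact if_pos (Ioo_subset_Icc_self hz)
      · apply ContinuousOn.intervalIntegrable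
        rw [uIcc_of_le hxy]
        exact hFR n hn.1 hn.2
    have hsubI : ∀ t ∈ uIoc x y, t ∈ Ioo (0:ℝ) 1 := by
      intro t ht
      rw [uIoc_of_le hxy] at ht
      exact ⟨hx.1.trans ht.1, ht.2.trans_lt hy.2⟩
    have hlim1 : Tendsto (fun n => ∫ t in x..y, F t (Q n t)) atTop
        (nhds (∫ t in x..y, F t (P t))) := by
      apply intervalIntegral.tendsto_integral_filter_of_dominated_convergence (fun _ => L)
      · filter_upwards [hev] with n hn
        rw [uIoc_of_le hxy]
        exact ((hFR n hn.1 hn.2).mono Ioc_subset_Icc_self).aestronglyMeasurable measurableSet_Ioc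
      · refine Eventually.of_forall fun n => Eventually.of_forall fun t ht => ?_
        rw [Real.norm_eq_abs]
        exact hFL t (hsubI t ht) _
      · exact intervalIntegrable_const
      · refine Eventually.of_forall fun t ht => ?_
        have ht' := hsubI t ht
        have h1 := hPlim t (Ioo_subset_Icc_self ht')
        refine tendsto_const_nhds.sub (tendsto_const_nhds.div (h1.max tendsto_const_nhds) ?_)
        exact (lt_max_of_lt_right (hmpos t ht')).ne'
    have hlim2 : Tendsto (fun n => ∫ t in x..y, F t (Q n t)) atTop (nhds (P y - P x)) := by
      refine Tendsto.congr' (hQint.mono fun n hn => hn.symm) ?_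
      exact (hPlim y (Ioo_subset_Icc_self hy)).sub (hPlim x (Ioo_subset_Icc_self hx))
    exact tendsto_nhds_unique hlim2 hlim1
  have hLip : ∀ x ∈ Ioo (0:ℝ) 1, ∀ y ∈ Ioo (0:ℝ) 1, x ≤ y → |P y - P x| ≤ L * |y - x| := by
    intro x hx y hy hxy
    rw [hint x hx y hy hxy]
    have := intervalIntegral.norm_integral_le_of_norm_le_const (a := x) (b := y) (C := L)
      (f := fun t => F t (P t)) ?_
    · simpa using this
    · intro t ht
      rw [uIoc_of_le hxy] at ht
      exact hFL t ⟨hx.1.trans ht.1, ht.2.trans_lt hy.2⟩ _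
  have hPc : ContinuousOn P (Ioo 0 1) := by
    have : LipschitzOnWith (⟨L, by positivity⟩ : NNReal) P (Ioo 0 1) := by
      apply LipschitzOnWith.of_dist_le_mul
      intro x hx y hy
      rw [Real.dist_eq, Real.dist_eq]
      change _ ≤ L * _
      rcases le_total x y with h | h
      · rw [abs_sub_comm, abs_sub_comm x y]; exact hLip x hx y hy h
      · exact hLip y hy x hx h
    exact this.continuousOn
  have hFc : ContinuousOn (fun t => F t (P t)) (Ioo 0 1) := by
    refine continuousOn_const.sub ((hgc.mono Ioo_subset_Icc_self).div
      (hPc.sup' hmc.continuousOn) ?_)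
    intro t ht
    exact (lt_max_of_lt_right (hmpos t ht)).ne'
  have hPd : ∀ w ∈ Ioo (0:ℝ) 1, HasDerivAt P (c - g w / P w) w := by
    intro w hw
    obtain ⟨x, hx0, hxw⟩ := exists_between hw.1
    have hx : x ∈ Ioo (0:ℝ) 1 := ⟨hx0, hxw.trans hw.2⟩
    have h1 : HasDerivAt (fun y => P x + ∫ t in x..y, F t (P t)) (F w (P w)) w := by
      apply HasDerivAt.const_add
      apply intervalIntegral.integral_hasDerivAt_right
      · apply ContinuousOn.intervalIntegrable
        rw [uIcc_of_le hxw.le]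
        exact hFc.mono fun t ht => ⟨hx0.trans_le ht.1, ht.2.trans_lt hw.2⟩
      · exact hFc.stronglyMeasurableAtFilter isOpen_Ioo w hw
      · exact hFc.continuousAt (isOpen_Ioo.mem_nhds hw)
    have h2 : F w (P w) = c - g w / P w := by
      simp only [F]
      rw [max_eq_left (hPm w (Ioo_subset_Icc_self hw))]
    rw [← h2]
    refine h1.congr_of_eventuallyEq ?_
    filter_upwards [Ioo_mem_nhds hxw hw.2] with y hy
    have := hint x hx y ⟨hx0.trans hy.1, hy.2⟩ hy.1.le
    linarith
  have hP00 : P 0 = 0 := by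
    apply le_antisymm
    · exact (hP2 0 ⟨le_rfl, hw0.1.le⟩).trans hq20.le
    · have := hPm 0 ⟨le_rfl, zero_le_one⟩
      simpa [m] using this
  have hP11 : P 1 = 0 := by
    apply le_antisymm
    · exact (hP1 1 ⟨zero_le_one, le_rfl⟩).trans hq11.le
    · have := hPm 1 ⟨zero_le_one, le_rfl⟩
      simpa [m] using this
  refine ⟨P, ?_, hP00, hP11, hPpos, hPd⟩
  intro w hw
  rcases eq_or_lt_of_le hw.1 with h | h
  · subst h
    rw [ContinuousWithinAt, hP00]
    have h1 : Tendsto m (nhdsWithin 0 (Icc 0 1)) (nhds 0) := by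
      have := hmc.continuousWithinAt (s := Icc 0 1) (x := (0:ℝ))
      simpa [ContinuousWithinAt, m] using this
    have h2 : Tendsto q2 (nhdsWithin 0 (Icc 0 1)) (nhds 0) := by
      have := hq2c 0 ⟨le_rfl, hw0.1.le⟩
      rw [ContinuousWithinAt, hq20] at this
      refine this.mono_left ?_
      rw [nhdsWithin_le_iff]
      filter_upwards [self_mem_nhdsWithin, mem_nhdsWithin_of_mem_nhds (Iio_mem_nhds hw0.1)]
        with x hx hx'
      exact ⟨hx.1, le_of_lt hx'⟩
    refine tendsto_of_tendsto_of_tendsto_of_le_of_le' h1 h2 ?_ ?_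
    · filter_upwards [self_mem_nhdsWithin] with x hx using hPm x hx
    · filter_upwards [self_mem_nhdsWithin, mem_nhdsWithin_of_mem_nhds (Iio_mem_nhds hw0.1)]
        with x hx hx'
      exact hP2 x ⟨hx.1, le_of_lt hx'⟩
  rcases eq_or_lt_of_le hw.2 with h' | h'
  · subst h'
    rw [ContinuousWithinAt, hP11]
    have h1 : Tendsto m (nhdsWithin 1 (Icc 0 1)) (nhds 0) := by
      have := hmc.continuousWithinAt (s := Icc 0 1) (x := (1:ℝ))
      simpa [ContinuousWithinAt, m] using this
    have h2 : Tendsto q1 (nhdsWithin 1 (Icc 0 1)) (nhds 0) := by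
      have := hq1c 1 hw
      rwa [ContinuousWithinAt, hq11] at this
    refine tendsto_of_tendsto_of_tendsto_of_le_of_le' h1 h2 ?_ ?_
    · filter_upwards [self_mem_nhdsWithin] with x hx using hPm x hx
    · filter_upwards [self_mem_nhdsWithin] with x hx using hP1 x hx
  · exact (hPd w ⟨h, h'⟩).continuousAt.continuousWithinAt

/-- slowly varying coefficient of the upper barrier -/
def barTheta (t0 w0 w : ℝ) : ℝ := t0 / (1 + 2 * t0 * (Real.log w0 - Real.log w))

/-- the upper barrier near `0` for speed `2` -/
def bar (t0 w0 w : ℝ) : ℝ := w * (1 - barTheta t0 w0 w)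

lemma barTheta_bounds {t0 w0 w : ℝ} (ht0 : 0 < t0) (hw : w ∈ Ioc 0 w0) :
    0 < barTheta t0 w0 w ∧ barTheta t0 w0 w ≤ t0 ∧
      1 ≤ 1 + 2 * t0 * (Real.log w0 - Real.log w) := by
  have h1 : 0 ≤ Real.log w0 - Real.log w := by
    have := Real.log_le_log hw.1 hw.2
    linarith
  have h2 : 1 ≤ 1 + 2 * t0 * (Real.log w0 - Real.log w) := by
    have : 0 ≤ 2 * t0 * (Real.log w0 - Real.log w) := by positivity
    linarith
  exact ⟨div_pos ht0 (by linarith), div_le_self ht0.le h2, h2⟩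

lemma bar_hasDerivAt {t0 w0 w : ℝ} (ht0 : 0 < t0) (hw : w ∈ Ioc 0 w0) :
    HasDerivAt (bar t0 w0) (1 - barTheta t0 w0 w - 2 * barTheta t0 w0 w ^ 2) w := by
  obtain ⟨h1, h2, h3⟩ := barTheta_bounds ht0 hw
  have hne : 1 + 2 * t0 * (Real.log w0 - Real.log w) ≠ 0 := by linarith
  have hw0 : w ≠ 0 := hw.1.ne'
  have hd : HasDerivAt (fun w => 1 + 2 * t0 * (Real.log w0 - Real.log w))
      (2 * t0 * (0 - w⁻¹)) w :=
    (((hasDerivAt_const w _).sub (Real.hasDerivAt_log hw0)).const_mul (2 * t0)).const_add 1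
  have hth : HasDerivAt (barTheta t0 w0) ((0 * (1 + 2 * t0 * (Real.log w0 - Real.log w)) -
      t0 * (2 * t0 * (0 - w⁻¹))) / (1 + 2 * t0 * (Real.log w0 - Real.log w)) ^ 2) w :=
    (hasDerivAt_const w t0).div hd hne
  have := (hasDerivAt_id w).mul (hth.const_sub 1)
  refine this.congr_deriv ?_
  simp only [id, barTheta]
  field_simp
  ring

lemma bar_super {t0 w0 w M gw : ℝ} (ht0 : 0 < t0) (ht4 : t0 ≤ 1 / 4) (hw : w ∈ Ioc 0 w0)
    (hM : 2 * M * w0 ≤ t0 ^ 2) (hg : gw ≤ w + M * w ^ 2) :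
    1 - barTheta t0 w0 w - 2 * barTheta t0 w0 w ^ 2 ≤ 2 - gw / bar t0 w0 w := by
  obtain ⟨h1, h2, h3⟩ := barTheta_bounds ht0 hw
  set θ := barTheta t0 w0 w with hθ
  have hbar : 0 < bar t0 w0 w := mul_pos hw.1 (by linarith)
  have hw0 : 0 < w0 := hw.1.trans_le hw.2
  suffices h : 2 * M * w ≤ θ ^ 2 by
    have : gw / bar t0 w0 w ≤ 1 + θ + 2 * θ ^ 2 := by
      rw [div_le_iff₀ hbar]
      have h4 : M * w ≤ θ ^ 2 * (1 - 2 * θ) := by nlinarith [sq_nonneg θ]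
      have h5 : bar t0 w0 w = w * (1 - θ) := rfl
      rw [h5]
      have h6 := mul_le_mul_of_nonneg_left h4 hw.1.le
      nlinarith
    linarith
  set lam := Real.log w0 - Real.log w with hlam
  have hlam0 : 0 ≤ lam := by
    have := Real.log_le_log hw.1 hw.2
    linarith
  have hw' : w = w0 * Real.exp (-lam) := by
    rw [hlam, neg_sub, Real.exp_sub, Real.exp_log hw.1, Real.exp_log hw0]
    field_simp
  have h4 : (1 + 2 * t0 * lam) ^ 2 ≤ Real.exp lam := by
    have h5 : 1 + 2 * t0 * lam ≤ Real.exp (lam / 2) := by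
      have := Real.add_one_le_exp (lam / 2)
      nlinarith
    have h6 : Real.exp lam = Real.exp (lam / 2) ^ 2 := by
      rw [← Real.exp_nat_mul]; congr 1; push_cast; ring
    rw [h6]
    exact pow_le_pow_left₀ (by linarith) h5 2
  have h5 : θ ^ 2 = t0 ^ 2 / (1 + 2 * t0 * lam) ^ 2 := by
    rw [hθ, barTheta, div_pow]
  rw [h5, le_div_iff₀ (by positivity), hw']
  have h6 : Real.exp (-lam) * (1 + 2 * t0 * lam) ^ 2 ≤ 1 := by
    rw [Real.exp_neg, inv_mul_le_iff₀ (Real.exp_pos _)]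
    linarith
  have h7 : 0 ≤ Real.exp (-lam) * (1 + 2 * t0 * lam) ^ 2 := by positivity
  calc 2 * M * (w0 * Real.exp (-lam)) * (1 + 2 * t0 * lam) ^ 2
      = (2 * M * w0) * (Real.exp (-lam) * (1 + 2 * t0 * lam) ^ 2) := by ring
    _ ≤ t0 ^ 2 * (Real.exp (-lam) * (1 + 2 * t0 * lam) ^ 2) :=
        mul_le_mul_of_nonneg_right hM h7
    _ ≤ t0 ^ 2 * 1 := mul_le_mul_of_nonneg_left h6 (sq_nonneg _)
    _ = t0 ^ 2 := mul_one _

lemma bar_le {t0 w0 w : ℝ} (ht0 : 0 < t0) (ht4 : t0 ≤ 1 / 4) (hw : w ∈ Icc 0 w0) :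
    3 / 4 * w ≤ bar t0 w0 w ∧ bar t0 w0 w ≤ w := by
  rcases eq_or_lt_of_le hw.1 with h | h
  · rw [← h]; simp [bar]
  · obtain ⟨h1, h2, h3⟩ := barTheta_bounds ht0 ⟨h, hw.2⟩
    simp only [bar]
    constructor <;> nlinarith

lemma bar_cont {t0 w0 : ℝ} (ht0 : 0 < t0) (ht4 : t0 ≤ 1 / 4) :
    ContinuousOn (bar t0 w0) (Icc 0 w0) := by
  intro w hw
  rcases eq_or_lt_of_le hw.1 with h | h
  · rw [← h, ContinuousWithinAt]
    have h0 : bar t0 w0 0 = 0 := by simp [bar]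
    rw [h0]
    have h1 : Tendsto (fun w : ℝ => 3 / 4 * w) (nhdsWithin 0 (Icc 0 w0)) (nhds 0) := by
      have : Continuous (fun w : ℝ => 3 / 4 * w) := by fun_prop
      simpa [ContinuousWithinAt] using this.continuousWithinAt (s := Icc 0 w0) (x := (0:ℝ))
    have h2 : Tendsto (fun w : ℝ => w) (nhdsWithin 0 (Icc 0 w0)) (nhds 0) :=
      tendsto_id.mono_left nhdsWithin_le_nhds
    refine tendsto_of_tendsto_of_tendsto_of_le_of_le' h1 h2 ?_ ?_
    · filter_upwards [self_mem_nhdsWithin] with x hx using (bar_le ht0 ht4 hx).1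
    · filter_upwards [self_mem_nhdsWithin] with x hx using (bar_le ht0 ht4 hx).2
  · exact (bar_hasDerivAt ht0 ⟨h, hw.2⟩).continuousAt.continuousWithinAt

/-- Fast decay forces a lower bound for the profile. -/
lemma fast_lower {g p W : ℝ → ℝ} {M w0 t0 B : ℝ} (hp : IsProf g 2 p) (hW : IsFront g 2 W)
    (hWp : ∀ ξ, deriv W ξ = - p (W ξ)) (hg0 : ∀ w ∈ Icc (0:ℝ) 1, 0 ≤ g w)
    (hgM : ∀ w ∈ Icc (0:ℝ) 1, g w ≤ w + M * w ^ 2)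
    (hB : 0 < B) (hlim : Tendsto (fun ξ => W ξ * Real.exp ξ) atTop (nhds B))
    (hw0 : w0 ∈ Ioo (0:ℝ) 1) (ht0 : 0 < t0) (ht4 : t0 ≤ 1 / 4) (hM : 2 * M * w0 ≤ t0 ^ 2) :
    w0 * (1 - t0) ≤ p w0 := by
  by_contra hcon
  push Not at hcon
  have hle : ∀ w ∈ Icc 0 w0, p w ≤ bar t0 w0 w := by
    intro w hw
    have := comp_lemma (D := fun w => p w - bar t0 w0 w)
      ((hp.cont.mono (Icc_subset_Icc_right hw0.2.le)).sub (bar_cont ht0 ht4)) ?_ ?_ w hw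
    · simpa using this
    · have : bar t0 w0 w0 = w0 * (1 - t0) := by simp [bar, barTheta]
      simp only [this]
      linarith
    · intro x hx hpos
      have hx1 : x ∈ Ioo (0:ℝ) 1 := ⟨hx.1, hx.2.trans hw0.2⟩
      refine ⟨_, ?_, (hp.der x hx1).sub (bar_hasDerivAt ht0 ⟨hx.1, hx.2.le⟩)⟩
      have h1 := bar_super ht0 ht4 ⟨hx.1, hx.2.le⟩ hM (hgM x (Ioo_subset_Icc_self hx1))
      have h2 : 0 < bar t0 w0 x := by
        have := (bar_le ht0 ht4 ⟨hx.1.le, hx.2.le⟩).1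
        linarith [hx.1]
      have h3 := div_le_div_of_nonneg_left (hg0 x (Ioo_subset_Icc_self hx1)) h2
        (show bar t0 w0 x ≤ p x by linarith)
      linarith
  obtain ⟨X, hX⟩ := front_surj hW hw0
  have ha := front_strictAnti hW
  have hmem : ∀ ξ ∈ Ici X, W ξ ∈ Ioc 0 w0 := fun ξ hξ =>
    ⟨(front_mem hW ξ).1, by rw [← hX]; exact ha.antitone hξ⟩
  have hd : ∀ ξ ∈ Ici X, HasDerivAt
      (fun ξ => Real.log (W ξ) + ξ - 1 / 4 * Real.log (1 + 2 * t0 * (Real.log w0 - Real.log (W ξ))))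
      (deriv W ξ / W ξ + 1 - 1 / 4 * ((2 * t0 * (0 - deriv W ξ / W ξ)) /
        (1 + 2 * t0 * (Real.log w0 - Real.log (W ξ))))) ξ := by
    intro ξ hξ
    have h1 := barTheta_bounds ht0 (hmem ξ hξ)
    have h2 : HasDerivAt (fun ξ => Real.log (W ξ)) (deriv W ξ / W ξ) ξ :=
      (front_hasDerivAt hW ξ).1.hasDerivAt.log (front_mem hW ξ).1.ne'
    have h3 : HasDerivAt (fun ξ => 1 + 2 * t0 * (Real.log w0 - Real.log (W ξ)))
        (2 * t0 * (0 - deriv W ξ / W ξ)) ξ :=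
      (((hasDerivAt_const ξ _).sub h2).const_mul (2 * t0)).const_add 1
    exact (h2.add (hasDerivAt_id ξ)).sub ((h3.log (by linarith [h1.2.2])).const_mul _)
  have hmono : MonotoneOn
      (fun ξ => Real.log (W ξ) + ξ - 1 / 4 * Real.log (1 + 2 * t0 * (Real.log w0 - Real.log (W ξ))))
      (Ici X) := by
    apply monotoneOn_of_deriv_nonneg (convex_Ici X)
    · exact fun ξ hξ => (hd ξ hξ).continuousAt.continuousWithinAt
    · rw [interior_Ici]
      exact fun ξ hξ => (hd ξ (Ioi_subset_Ici_self hξ)).differentiableAt.differentiableWithinAt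
    · rw [interior_Ici]
      intro ξ hξ
      have hξ' := Ioi_subset_Ici_self hξ
      rw [(hd ξ hξ').deriv]
      obtain ⟨h1, h2, h3⟩ := barTheta_bounds ht0 (hmem ξ hξ')
      have hWpos := (front_mem hW ξ).1
      have h4 := hle (W ξ) ⟨hWpos.le, (hmem ξ hξ').2⟩
      set r := - (deriv W ξ / W ξ) with hr
      have h5 : r ≤ 1 - barTheta t0 w0 (W ξ) := by
        rw [hr, hWp, neg_div, neg_neg, div_le_iff₀ hWpos]
        simp only [bar] at h4
        linarith
      have h6 : (2 * t0 * (0 - deriv W ξ / W ξ)) /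
        (1 + 2 * t0 * (Real.log w0 - Real.log (W ξ))) = 2 * r * barTheta t0 w0 (W ξ) := by
        rw [barTheta, hr]; ring
      rw [h6, show deriv W ξ / W ξ = - r by rw [hr]; ring]
      nlinarith
  have hlog : Tendsto (fun ξ => Real.log (W ξ) + ξ) atTop (nhds (Real.log B)) := by
    have := (Real.continuousAt_log hB.ne').tendsto.comp hlim
    refine this.congr fun ξ => ?_
    simp only [Function.comp]
    rw [Real.log_mul (front_mem hW ξ).1.ne' (Real.exp_pos _).ne', Real.log_exp]
  have hlogW : Tendsto (fun ξ => Real.log (W ξ)) atTop atBot := by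
    apply Real.tendsto_log_nhdsGT_zero.comp
    rw [tendsto_nhdsWithin_iff]
    exact ⟨hW.2.2.2.1, Eventually.of_forall fun ξ => (front_mem hW ξ).1⟩
  have hbig : Tendsto (fun ξ => Real.log (1 + 2 * t0 * (Real.log w0 - Real.log (W ξ))))
      atTop atTop := by
    apply Real.tendsto_log_atTop.comp
    apply tendsto_atTop_add_const_left
    apply Tendsto.const_mul_atTop (by positivity)
    have := tendsto_neg_atBot_atTop.comp hlogW
    exact tendsto_atTop_add_const_left _ _ this
  have h1 := hlog.eventually (gt_mem_nhds (lt_add_one (Real.log B)))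
  set c0 := Real.log (W X) + X - 1 / 4 * Real.log (1 + 2 * t0 * (Real.log w0 - Real.log (W X)))
    with hc0
  obtain ⟨ξ, ⟨h2, h3⟩, h4⟩ := ((h1.and (hbig.eventually_gt_atTop
    (4 * (Real.log B + 1 - c0)))).and (eventually_ge_atTop X)).exists
  have h5 := hmono (mem_Ici.2 le_rfl) (mem_Ici.2 h4) h4
  simp only at h5
  rw [← hc0] at h5
  linarith

/-- Upper bound for any profile at speed `2`. -/
lemma prof_two_upper {g p : ℝ → ℝ} {M w0 t0 : ℝ} (hp : IsProf g 2 p)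
    (hg0 : ∀ w ∈ Icc (0:ℝ) 1, 0 ≤ g w) (hM0 : 0 ≤ M)
    (hgM : ∀ w ∈ Icc (0:ℝ) 1, w - M * w ^ 2 ≤ g w)
    (hw0 : w0 ∈ Ioo (0:ℝ) 1) (ht0 : 0 < t0) (hM : 2 * M * w0 ≤ t0 ^ 2) :
    p w0 ≤ w0 * (1 + t0) := by
  by_contra hcon
  push Not at hcon
  set k := t0 ^ 2 / (2 * (1 + t0)) with hk
  have hk0 : 0 < k := by positivity
  have hk2 : k * (2 * (1 + t0)) = t0 ^ 2 := by rw [hk]; field_simp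
  set a := w0 * Real.exp (-(2 / k)) with hadef
  have ha0 : 0 < a := mul_pos hw0.1 (Real.exp_pos _)
  have haw : a ≤ w0 := mul_le_of_le_one_right hw0.1.le
    (Real.exp_le_one_iff.2 (by have : 0 < 2 / k := by positivity
                               linarith))
  have hvd : ∀ w, 0 < w → HasDerivAt (fun w => w * (1 + t0 + k * (Real.log w0 - Real.log w)))
      (1 * (1 + t0 + k * (Real.log w0 - Real.log w)) + w * (k * (0 - w⁻¹))) w := by
    intro w hw
    exact (hasDerivAt_id w).mul ((((hasDerivAt_const w _).sub
      (Real.hasDerivAt_log hw.ne')).const_mul k).const_add (1 + t0))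
  have hle : ∀ w ∈ Icc a w0, w * (1 + t0 + k * (Real.log w0 - Real.log w)) ≤ p w := by
    intro w hw
    have := comp_lemma (a := a) (b := w0)
      (D := fun w => w * (1 + t0 + k * (Real.log w0 - Real.log w)) - p w) ?_ ?_ ?_ w hw
    · simpa using this
    · apply ContinuousOn.sub
      · exact fun x hx => (hvd x (ha0.trans_le hx.1)).continuousAt.continuousWithinAt
      · exact hp.cont.mono (Icc_subset_Icc ha0.le hw0.2.le)
    · simp only [sub_self, mul_zero, add_zero]
      linarith
    · intro x hx hpos
      have hx0 : 0 < x := ha0.trans hx.1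
      have hx1 : x ∈ Ioo (0:ℝ) 1 := ⟨hx0, hx.2.trans hw0.2⟩
      refine ⟨_, ?_, (hvd x hx0).sub (hp.der x hx1)⟩
      set T := t0 + k * (Real.log w0 - Real.log x) with hT
      have hT0 : t0 ≤ T := by
        have := Real.log_le_log hx0 hx.2.le
        have : 0 ≤ k * (Real.log w0 - Real.log x) := mul_nonneg hk0.le (by linarith)
        linarith
      have e1 : 1 + t0 + k * (Real.log w0 - Real.log x) = 1 + T := by rw [hT]; ring
      rw [e1] at hpos ⊢
      have e2 : x * (k * (0 - x⁻¹)) = - k := by field_simp; ring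
      rw [e2]
      have hpx := hp.pos x hx1
      have hv : 0 < x * (1 + T) := mul_pos hx0 (by linarith)
      have h3 := div_le_div_of_nonneg_left (hg0 x (Ioo_subset_Icc_self hx1)) hpx
        (show p x ≤ x * (1 + T) by linarith)
      have h4 : 1 - T + k ≤ g x / (x * (1 + T)) := by
        rw [le_div_iff₀ hv]
        have h5 := hgM x (Ioo_subset_Icc_self hx1)
        have h6 : k * (1 + T) ≤ T ^ 2 / 2 := by
          have h7 : k * (1 + T) * (2 * (1 + t0)) ≤ T ^ 2 / 2 * (2 * (1 + t0)) := by
            calc k * (1 + T) * (2 * (1 + t0)) = t0 ^ 2 * (1 + T) := by rw [← hk2]; ring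
              _ ≤ T ^ 2 / 2 * (2 * (1 + t0)) := by
                have : t0 ^ 2 ≤ T ^ 2 := pow_le_pow_left₀ ht0.le hT0 2
                nlinarith [mul_nonneg (mul_nonneg ht0.le (ht0.le.trans hT0)) (sub_nonneg.2 hT0)]
          exact le_of_mul_le_mul_right h7 (by positivity)
        have h8 : M * x ≤ T ^ 2 / 2 := by
          have : t0 ^ 2 ≤ T ^ 2 := pow_le_pow_left₀ ht0.le hT0 2
          have : M * x ≤ M * w0 := mul_le_mul_of_nonneg_left hx.2.le hM0
          linarith
        have h9 : M * x ≤ T ^ 2 - k * (1 + T) := by linarith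
        have := mul_le_mul_of_nonneg_left h9 hx0.le
        nlinarith
      linarith
  have h1 := hle a ⟨le_rfl, haw⟩
  have h2 := prof_le_left hp hg0 a ⟨ha0.le, haw.trans hw0.2.le⟩
  have h3 : Real.log w0 - Real.log a = 2 / k := by
    rw [hadef, Real.log_mul hw0.1.ne' (Real.exp_pos _).ne', Real.log_exp]; ring
  have h4 : k * (2 / k) = 2 := by field_simp
  rw [h3, h4] at h1
  nlinarith

lemma fast_asymp {g p W : ℝ → ℝ} {C wb : ℝ} (hW : IsFront g 2 W)
    (hWp : ∀ ξ, deriv W ξ = - p (W ξ)) (hC : 0 < C) (hwb : 0 < wb)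
    (h : ∀ w ∈ Ioc 0 wb, |p w - w| ≤ C * (w * √w)) :
    ∃ B > 0, Tendsto (fun ξ => W ξ * Real.exp ξ) atTop (nhds B) := by
  have hsq : Tendsto (fun ξ => √(W ξ)) atTop (nhds 0) := by
    have := (Real.continuous_sqrt.tendsto 0).comp hW.2.2.2.1
    simpa [Function.comp_def] using this
  have hCsq : Tendsto (fun ξ => C * √(W ξ)) atTop (nhds 0) := by
    simpa using hsq.const_mul C
  have hev := (hW.2.2.2.1.eventually (gt_mem_nhds hwb)).and
    (hCsq.eventually (gt_mem_nhds (show (0:ℝ) < 1 / 2 by norm_num)))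
  obtain ⟨X, hX⟩ := eventually_atTop.1 hev
  have hdl : ∀ ξ, HasDerivAt (fun ξ => Real.log (W ξ) + ξ) (deriv W ξ / W ξ + 1) ξ := fun ξ =>
    ((front_hasDerivAt hW ξ).1.hasDerivAt.log (front_mem hW ξ).1.ne').add (hasDerivAt_id ξ)
  have hds : ∀ ξ, HasDerivAt (fun ξ => 4 * C * √(W ξ)) (4 * C * (deriv W ξ / (2 * √(W ξ)))) ξ :=
    fun ξ => ((front_hasDerivAt hW ξ).1.hasDerivAt.sqrt (front_mem hW ξ).1.ne').const_mul _
  have key : ∀ ξ, X ≤ ξ → |deriv W ξ / W ξ + 1| ≤ - (4 * C * (deriv W ξ / (2 * √(W ξ)))) := by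
    intro ξ hξ
    obtain ⟨h1, h2⟩ := hX ξ hξ
    have h0 := (front_mem hW ξ).1
    have h3 := h (W ξ) ⟨h0, h1.le⟩
    have hu : 0 < √(W ξ) := Real.sqrt_pos.2 h0
    have huu : W ξ = √(W ξ) ^ 2 := (Real.sq_sqrt h0.le).symm
    set u := √(W ξ) with hudef
    have hr : ∃ r, p (W ξ) = r * W ξ := ⟨p (W ξ) / W ξ, by field_simp⟩
    obtain ⟨r, hr⟩ := hr
    rw [hWp, hr]
    have e1 : -(r * W ξ) / W ξ + 1 = 1 - r := by field_simp; ring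
    have e2 : -(4 * C * (-(r * W ξ) / (2 * u))) = 2 * C * r * u := by
      rw [huu]; field_simp; ring
    rw [e1, e2]
    rw [hr] at h3
    have h4 : |r - 1| ≤ C * u := by
      have : |r * W ξ - W ξ| = |r - 1| * W ξ := by
        rw [← abs_of_pos h0, ← abs_mul, abs_of_pos h0]; ring_nf
      rw [this] at h3
      have : |r - 1| * W ξ ≤ (C * u) * W ξ := by linarith
      exact le_of_mul_le_mul_right this h0
    rw [abs_sub_comm]
    have h5 := (abs_le.1 h4).1
    have h6 : 1 / 2 ≤ r := by linarith
    have : 0 < C * u := mul_pos hC hu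
    nlinarith
  have hmono : MonotoneOn (fun ξ => Real.log (W ξ) + ξ - 4 * C * √(W ξ)) (Ici X) := by
    apply monotoneOn_of_deriv_nonneg (convex_Ici X)
    · exact fun ξ hξ => ((hdl ξ).sub (hds ξ)).continuousAt.continuousWithinAt
    · exact fun ξ hξ => ((hdl ξ).sub (hds ξ)).differentiableAt.differentiableWithinAt
    · rw [interior_Ici]
      intro ξ hξ
      refine le_of_le_of_eq ?_ ((hdl ξ).sub (hds ξ)).deriv.symm
      linarith [(abs_le.1 (key ξ (le_of_lt hξ))).1]
  have hanti : AntitoneOn (fun ξ => Real.log (W ξ) + ξ + 4 * C * √(W ξ)) (Ici X) := by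
    apply antitoneOn_of_deriv_nonpos (convex_Ici X)
    · exact fun ξ hξ => ((hdl ξ).add (hds ξ)).continuousAt.continuousWithinAt
    · exact fun ξ hξ => ((hdl ξ).add (hds ξ)).differentiableAt.differentiableWithinAt
    · rw [interior_Ici]
      intro ξ hξ
      refine le_of_eq_of_le ((hdl ξ).add (hds ξ)).deriv ?_
      linarith [(abs_le.1 (key ξ (le_of_lt hξ))).2]
  set F := fun ξ => Real.log (W ξ) + ξ - 4 * C * √(W ξ) with hF
  have hm : Monotone (fun ξ => F (max X ξ)) := fun a b hab =>
    hmono (mem_Ici.2 (le_max_left _ _)) (mem_Ici.2 (le_max_left _ _)) (max_le_max le_rfl hab)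
  have hbdd : BddAbove (range (fun ξ => F (max X ξ))) := by
    refine ⟨Real.log (W X) + X + 4 * C * √(W X), ?_⟩
    rintro _ ⟨ξ, rfl⟩
    have := hanti (mem_Ici.2 le_rfl) (mem_Ici.2 (le_max_left X ξ)) (le_max_left X ξ)
    simp only at this
    have h2 : 0 ≤ 4 * C * √(W (max X ξ)) := by positivity
    simp only [hF]
    linarith
  have hlim := tendsto_atTop_ciSup hm hbdd
  set Z := ⨆ i, F (max X i)
  have hlim2 : Tendsto F atTop (nhds Z) := by
    refine hlim.congr' ?_
    filter_upwards [eventually_ge_atTop X] with ξ hξ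
    rw [max_eq_right hξ]
  have hlim3 : Tendsto (fun ξ => Real.log (W ξ) + ξ) atTop (nhds Z) := by
    have := hlim2.add (hCsq.const_mul 4)
    simp only [mul_zero, add_zero] at this
    refine this.congr fun ξ => ?_
    simp only [hF]; ring
  refine ⟨Real.exp Z, Real.exp_pos _, ?_⟩
  refine ((Real.continuous_exp.tendsto Z).comp hlim3).congr fun ξ => ?_
  simp only [Function.comp, Real.exp_add, Real.exp_log (front_mem hW ξ).1]

lemma littleO_iff {W : ℝ → ℝ} {B : ℝ} :
    ((fun ξ => W ξ - B * Real.exp (-ξ)) =o[atTop] fun ξ => Real.exp (-ξ)) ↔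
      Tendsto (fun ξ => W ξ * Real.exp ξ) atTop (nhds B) := by
  rw [isLittleO_iff_tendsto (fun x hx => absurd hx (Real.exp_pos _).ne')]
  have e : (fun ξ => (W ξ - B * Real.exp (-ξ)) / Real.exp (-ξ)) =
      fun ξ => W ξ * Real.exp ξ - B := by
    funext ξ
    rw [Real.exp_neg]
    field_simp
  rw [e]
  exact tendsto_sub_nhds_zero_iff

lemma fast_contra_gt {g W : ℝ → ℝ} {c M B : ℝ} (hW : IsFront g c W) (hc : 2 < c)
    (hgM : ∀ w ∈ Icc (0:ℝ) 1, g w ≤ w + M * w ^ 2)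
    (hB : 0 < B) (hlim : Tendsto (fun ξ => W ξ * Real.exp ξ) atTop (nhds B)) : False := by
  have hMW : Tendsto (fun ξ => M * W ξ) atTop (nhds 0) := by
    simpa using hW.2.2.2.1.const_mul M
  have hev := ((hMW.eventually (gt_mem_nhds (show 0 < (c - 2) / 2 by linarith))).and
    (hlim.eventually (lt_mem_nhds (show B / 2 < B by linarith)))).and
    (hlim.eventually (gt_mem_nhds (show B < B + 1 by linarith)))
  obtain ⟨X, hX⟩ := eventually_atTop.1 hev
  set m := B / 4 * (c - 2) with hm
  have hm0 : 0 < m := mul_pos (by linarith) (by linarith)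
  have hd : ∀ ξ, HasDerivAt (fun ξ => (deriv W ξ + (c - 1) * W ξ) * Real.exp ξ - m * ξ)
      (((- c * deriv W ξ - g (W ξ)) + (c - 1) * deriv W ξ) * Real.exp ξ +
        (deriv W ξ + (c - 1) * W ξ) * Real.exp ξ - m * 1) ξ := fun ξ =>
    (((front_hasDerivAt hW ξ).2.add ((front_hasDerivAt hW ξ).1.hasDerivAt.const_mul (c - 1))).mul
      (Real.hasDerivAt_exp ξ)).sub ((hasDerivAt_id ξ).const_mul m)
  have hmono : MonotoneOn (fun ξ => (deriv W ξ + (c - 1) * W ξ) * Real.exp ξ - m * ξ)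
      (Ici X) := by
    apply monotoneOn_of_deriv_nonneg (convex_Ici X)
    · exact fun ξ hξ => (hd ξ).continuousAt.continuousWithinAt
    · exact fun ξ hξ => (hd ξ).differentiableAt.differentiableWithinAt
    · rw [interior_Ici]
      intro ξ hξ
      rw [(hd ξ).deriv]
      obtain ⟨⟨h1, h2⟩, h3⟩ := hX ξ (le_of_lt hξ)
      have h0 := front_mem hW ξ
      have h4 := hgM (W ξ) (Ioo_subset_Icc_self h0)
      have h5 : W ξ * ((c - 2) / 2) ≤ (c - 1) * W ξ - g (W ξ) := by nlinarith [h0.1]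
      have h6 := mul_le_mul_of_nonneg_right h5 (Real.exp_pos ξ).le
      have h7 : m ≤ (W ξ * Real.exp ξ) * ((c - 2) / 2) := by
        rw [hm]; nlinarith
      linarith
  set V0 := (deriv W X + (c - 1) * W X) * Real.exp X - m * X with hV0
  obtain ⟨ξ, h1, h2⟩ := ((tendsto_id.const_mul_atTop hm0).eventually_gt_atTop
    ((c - 1) * (B + 1) - V0)).and (eventually_ge_atTop X) |>.exists
  have h3 := hmono (mem_Ici.2 le_rfl) (mem_Ici.2 h2) h2
  simp only at h3
  rw [← hV0] at h3
  have h4 := (hX ξ h2).2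
  have h5 := mul_pos_of_neg_of_neg (hW.2.2.2.2 ξ) (neg_neg_of_pos (Real.exp_pos ξ))
  simp only [id] at h1
  nlinarith

lemma prof_contra {gs gh ps ph : ℝ → ℝ} {C M wb : ℝ} (hps : IsProf gs 2 ps) (hph : IsProf gh 2 ph)
    (hlt : ∀ w ∈ Ioo (0:ℝ) 1, gs w < gh w) (hgs0 : ∀ w ∈ Ioo (0:ℝ) 1, 0 < gs w) (hM0 : 0 ≤ M)
    (hgM : ∀ w ∈ Icc (0:ℝ) 1, gs w ≤ w + M * w ^ 2) (hC : 0 < C) (hwb : wb ∈ Ioo (0:ℝ) 1)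
    (hCw : C * √wb ≤ 1 / 4) (hMw : M * wb ≤ 1)
    (hsl : ∀ w ∈ Ioc 0 wb, w * (1 - C * √w) ≤ ps w)
    (hhl : ∀ w ∈ Ioc 0 wb, w * (1 - C * √w) ≤ ph w)
    (hhu : ∀ w ∈ Ioc 0 wb, ph w ≤ w * (1 + C * √w)) : False := by
  have hD : ∀ w ∈ Icc (0:ℝ) 1, ps w - ph w ≤ 0 := by
    refine comp_lemma (hps.cont.sub hph.cont) (by simp [hps.p1, hph.p1]) ?_
    intro x hx hpos
    refine ⟨_, ?_, (hps.der x hx).sub (hph.der x hx)⟩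
    have h1 : gs x / ps x ≤ gs x / ph x :=
      div_le_div_of_nonneg_left (hgs0 x hx).le (hph.pos x hx) (by linarith)
    have h2 : gs x / ph x ≤ gh x / ph x :=
      div_le_div_of_nonneg_right (hlt x hx).le (hph.pos x hx).le
    linarith
  have hDb : ps wb - ph wb < 0 := by
    rcases (hD wb (Ioo_subset_Icc_self hwb)).lt_or_eq with h | h
    · exact h
    exfalso
    have hmax : IsLocalMax (fun w => ps w - ph w) wb := by
      filter_upwards [Icc_mem_nhds hwb.1 hwb.2] with w hw
      rw [h]; exact hD w hw
    have h1 := hmax.hasDerivAt_eq_zero ((hps.der wb hwb).sub (hph.der wb hwb))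
    have h2 : gs wb / ph wb < gh wb / ph wb :=
      div_lt_div_of_pos_right (hlt wb hwb) (hph.pos wb hwb)
    rw [show ps wb = ph wb by linarith] at h1
    linarith
  set A := 4 * C + 2 * M with hA
  have hA0 : 0 < A := by positivity
  have hd : ∀ w ∈ Ioc 0 wb, HasDerivAt
      (fun w => (ph w - ps w) / w * Real.exp (-(2 * A * √w)))
      ((((2 - gh w / ph w) - (2 - gs w / ps w)) * w - (ph w - ps w) * 1) / w ^ 2 *
        Real.exp (-(2 * A * √w)) + (ph w - ps w) / w * (Real.exp (-(2 * A * √w)) *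
          (-(2 * A * (1 / (2 * √w)))))) w := by
    intro w hw
    have hw1 : w ∈ Ioo (0:ℝ) 1 := ⟨hw.1, hw.2.trans_lt hwb.2⟩
    exact (((hph.der w hw1).sub (hps.der w hw1)).div (hasDerivAt_id w) hw.1.ne').mul
      (((Real.hasDerivAt_sqrt hw.1.ne').const_mul (2 * A)).neg.exp)
  have hanti : AntitoneOn (fun w => (ph w - ps w) / w * Real.exp (-(2 * A * √w))) (Ioc 0 wb) := by
    apply antitoneOn_of_deriv_nonpos (convex_Ioc 0 wb)
    · exact fun w hw => (hd w hw).continuousAt.continuousWithinAt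
    · rw [interior_Ioc]
      exact fun w hw => (hd w (Ioo_subset_Ioc_self hw)).differentiableAt.differentiableWithinAt
    · rw [interior_Ioc]
      intro w hw'
      have hw := Ioo_subset_Ioc_self hw'
      rw [(hd w hw).deriv]
      have hw1 : w ∈ Ioo (0:ℝ) 1 := ⟨hw.1, hw.2.trans_lt hwb.2⟩
      have hG := hD w (Ioo_subset_Icc_self hw1)
      have hps0 := hps.pos w hw1
      have hph0 := hph.pos w hw1
      have h1 : gs w / ph w ≤ gh w / ph w := div_le_div_of_nonneg_right (hlt w hw1).le hph0.le
      have h2 : gs w / ps w - gs w / ph w = (ph w - ps w) * (gs w / (ps w * ph w)) := by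
        field_simp
      have hu0 : 0 < √w := Real.sqrt_pos.2 hw.1
      have huu : w = √w ^ 2 := (Real.sq_sqrt hw.1.le).symm
      have hsl' := hsl w hw
      have hhl' := hhl w hw
      have hgM' := hgM w (Ioo_subset_Icc_self hw1)
      have hx4 : C * √w ≤ 1 / 4 :=
        (mul_le_mul_of_nonneg_left (Real.sqrt_le_sqrt hw.2) hC.le).trans hCw
      have hu1 : √w ≤ 1 := by
        exact Real.sqrt_le_iff.2 ⟨by norm_num, by linarith [hw1.2]⟩
      set u := √w with hu
      have h3 : gs w / (ps w * ph w) ≤ (1 + A * u) / w := by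
        rw [div_le_div_iff₀ (by positivity) hw.1]
        have hx0 : 0 < C * u := mul_pos hC hu0
        set x := C * u with hx
        have h4 : (w * (1 - x)) * (w * (1 - x)) ≤ ps w * ph w :=
          mul_le_mul hsl' hhl' (mul_nonneg hw.1.le (by linarith)) hps0.le
        have h5 : gs w * w ≤ (w + M * w ^ 2) * w := mul_le_mul_of_nonneg_right hgM' hw.1.le
        have hMw' : M * w ≤ 1 := (mul_le_mul_of_nonneg_left hw.2 hM0).trans hMw
        have hMw0 : 0 ≤ M * w := mul_nonneg hM0 hw.1.le
        have hwu : M * w ≤ M * u := mul_le_mul_of_nonneg_left (by nlinarith) hM0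
        have h6 : 1 + M * w ≤ (1 + A * u) * (1 - x) ^ 2 := by
          have h7 : 1 ≤ (1 + 4 * x) * (1 - x) ^ 2 := by nlinarith [mul_pos hx0 hx0]
          have h8 : 1 / 2 ≤ (1 - x) ^ 2 := by nlinarith
          have h9 : A * u = 4 * x + 2 * (M * u) := by rw [hA, hx]; ring
          rw [h9]
          nlinarith
        have h10 := mul_le_mul_of_nonneg_left h6 (sq_nonneg w)
        have h11 := mul_le_mul_of_nonneg_left h4 (show 0 ≤ 1 + A * u by positivity)
        nlinarith
      have h4 := mul_le_mul_of_nonneg_left h3 (show 0 ≤ ph w - ps w by linarith)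
      have h5 : ((2 - gh w / ph w) - (2 - gs w / ps w)) ≤ (ph w - ps w) * ((1 + A * u) / w) := by
        linarith
      have h6 : ((((2 - gh w / ph w) - (2 - gs w / ps w)) * w - (ph w - ps w) * 1) / w ^ 2 *
        Real.exp (-(2 * A * u)) + (ph w - ps w) / w * (Real.exp (-(2 * A * u)) *
          (-(2 * A * (1 / (2 * u)))))) =
          (((2 - gh w / ph w) - (2 - gs w / ps w)) - (ph w - ps w) * ((1 + A * u) / w)) *
            (Real.exp (-(2 * A * u)) / w) := by
        generalize gh w / ph w = y1
        generalize gs w / ps w = y2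
        generalize ph w = y3
        generalize ps w = y4
        generalize Real.exp (-(2 * A * u)) = y5
        rw [huu]
        field_simp
        ring
      rw [h6]
      exact mul_nonpos_of_nonpos_of_nonneg (by linarith)
        (div_nonneg (Real.exp_pos _).le hw.1.le)
  set d := (ph wb - ps wb) / wb * Real.exp (-(2 * A * √wb)) with hd0
  have hdpos : 0 < d := mul_pos (div_pos (by linarith) hwb.1) (Real.exp_pos _)
  have hsb : 0 < √wb := Real.sqrt_pos.2 hwb.1
  set v := min (√wb) (d / (4 * C)) with hv
  have hv0 : 0 < v := lt_min hsb (by positivity)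
  have hvw : v ^ 2 ∈ Ioc 0 wb := by
    refine ⟨by positivity, ?_⟩
    rw [← Real.sq_sqrt hwb.1.le]
    exact pow_le_pow_left₀ hv0.le (min_le_left _ _) 2
  have h1 := hanti hvw ⟨hwb.1, le_rfl⟩ hvw.2
  simp only at h1
  rw [← hd0] at h1
  have hsv : √(v ^ 2) = v := Real.sqrt_sq hv0.le
  have h2 := hsl _ hvw
  have h3 := hhu _ hvw
  rw [hsv] at h1 h2 h3
  have h4 : (ph (v ^ 2) - ps (v ^ 2)) / v ^ 2 ≤ 2 * C * v := by
    rw [div_le_iff₀ hvw.1]; linarith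
  have h5 : Real.exp (-(2 * A * v)) ≤ 1 := Real.exp_le_one_iff.2 (by
    have : 0 < 2 * A * v := by positivity
    linarith)
  have h6 : v ≤ d / (4 * C) := min_le_right _ _
  rw [le_div_iff₀ (by positivity)] at h6
  have h7 : (ph (v ^ 2) - ps (v ^ 2)) / v ^ 2 * Real.exp (-(2 * A * v)) ≤ 2 * C * v * 1 :=
    mul_le_mul h4 h5 (Real.exp_pos _).le (by positivity)
  linarith

lemma taylor_two {φ : ℝ → ℝ} {d C : ℝ} (h : ContDiffOn ℝ 2 φ (Icc 0 1)) (h0 : φ 0 = 0)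
    (hd : derivWithin φ (Icc 0 1) 0 = d)
    (hC : ∀ w ∈ Icc (0:ℝ) 1, |iteratedDerivWithin 2 φ (Icc 0 1) w| ≤ C) :
    ∀ w ∈ Icc (0:ℝ) 1, |φ w - d * w| ≤ C * w ^ 2 := by
  intro w hw
  have := taylor_mean_remainder_bound (n := 1) zero_le_one (by exact_mod_cast h) hw
    (C := C) (by simpa using hC)
  simpa [taylorWithinEval_succ, taylor_within_zero_eval, h0, hd, iteratedDerivWithin_one,
    mul_comm] using this

lemma lip_ends {φ : ℝ → ℝ} {C : ℝ} (h : ContDiffOn ℝ 2 φ (Icc 0 1)) (h0 : φ 0 = 0)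
    (h1 : φ 1 = 0) (hC : ∀ w ∈ Icc (0:ℝ) 1, |derivWithin φ (Icc 0 1) w| ≤ C) :
    ∀ w ∈ Icc (0:ℝ) 1, |φ w| ≤ C * w ∧ |φ w| ≤ C * (1 - w) := by
  intro w hw
  have hd : DifferentiableOn ℝ φ (Icc 0 1) := h.differentiableOn (by norm_num)
  have a := (convex_Icc (0:ℝ) 1).norm_image_sub_le_of_norm_derivWithin_le (C := C) hd
    (by simpa using hC) (x := 0) (y := w) (by simp) hw
  have b := (convex_Icc (0:ℝ) 1).norm_image_sub_le_of_norm_derivWithin_le (C := C) hd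
    (by simpa using hC) (x := 1) (y := w) (by simp) hw
  rw [h0, sub_zero, sub_zero, Real.norm_eq_abs, Real.norm_eq_abs, abs_of_nonneg hw.1] at a
  rw [h1, sub_zero, Real.norm_eq_abs, Real.norm_eq_abs, abs_sub_comm,
    abs_of_nonneg (sub_nonneg.2 hw.2)] at b
  exact ⟨a, b⟩

lemma bound_iter {φ : ℝ → ℝ} {n : ℕ} (hn : n ≤ 2) (h : ContDiffOn ℝ 2 φ (Icc 0 1)) :
    ∃ C > 0, ∀ w ∈ Icc (0:ℝ) 1, |iteratedDerivWithin n φ (Icc 0 1) w| ≤ C := by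
  have hc := h.continuousOn_iteratedDerivWithin (m := n) (by exact_mod_cast hn)
    (uniqueDiffOn_Icc zero_lt_one)
  obtain ⟨C, hC⟩ := isCompact_Icc.exists_bound_of_continuousOn hc
  exact ⟨max C 1, by positivity, fun w hw => (hC w hw).trans (le_max_left _ _)⟩

lemma lower_kpp {φ : ℝ → ℝ} {d : ℝ} (hc : ContinuousOn φ (Icc 0 1)) (h0 : φ 0 = 0)
    (h1 : φ 1 = 0) (hd0 : HasDerivWithinAt φ 1 (Icc 0 1) 0)
    (hd1 : HasDerivWithinAt φ d (Icc 0 1) 1) (hd : d < 0)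
    (hpos : ∀ w ∈ Ioo (0:ℝ) 1, 0 < φ w) :
    ∃ κ > 0, ∀ w ∈ Icc (0:ℝ) 1, κ * (w * (1 - w)) ≤ φ w := by
  have key : ∃ κ > 0, ∀ w ∈ Icc (0:ℝ) 1, w ∈ Icc (0:ℝ) 1 → κ * (w * (1 - w)) ≤ φ w := by
    refine isCompact_Icc.induction_on
      (p := fun S => ∃ κ > 0, ∀ w ∈ S, w ∈ Icc (0:ℝ) 1 → κ * (w * (1 - w)) ≤ φ w) ?_ ?_ ?_ ?_
    · exact ⟨1, one_pos, by simp⟩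
    · rintro s t hst ⟨κ, hκ, h⟩
      exact ⟨κ, hκ, fun w hw => h w (hst hw)⟩
    · rintro s t ⟨κ, hκ, h⟩ ⟨κ', hκ', h'⟩
      refine ⟨min κ κ', lt_min hκ hκ', ?_⟩
      intro w hw hw1
      have hb : 0 ≤ w * (1 - w) := mul_nonneg hw1.1 (by linarith [hw1.2])
      rcases hw with hw | hw
      · exact (mul_le_mul_of_nonneg_right (min_le_left _ _) hb).trans (h w hw hw1)
      · exact (mul_le_mul_of_nonneg_right (min_le_right _ _) hb).trans (h' w hw hw1)
    · intro x hx
      rcases hx.1.eq_or_lt with rfl | hx0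
      · have := (hasDerivWithinAt_iff_isLittleO.1 hd0).def (show (0:ℝ) < 1 / 2 by norm_num)
        refine ⟨_, this, 1 / 2, by norm_num, ?_⟩
        intro w hw hw1
        simp only [mem_ofPred_eq, h0, sub_zero, smul_eq_mul, mul_one, Real.norm_eq_abs,
          abs_of_nonneg hw1.1] at hw
        nlinarith [(abs_le.1 hw).1, hw1.1, hw1.2]
      rcases hx.2.eq_or_lt with rfl | hx1
      · have := (hasDerivWithinAt_iff_isLittleO.1 hd1).def (show (0:ℝ) < - d / 2 by linarith)
        refine ⟨_, this, - d / 2, by linarith, ?_⟩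
        intro w hw hw1
        simp only [mem_ofPred_eq, h1, sub_zero, smul_eq_mul, Real.norm_eq_abs,
          abs_sub_comm w 1, abs_of_nonneg (sub_nonneg.2 hw1.2)] at hw
        have := (abs_le.1 hw).1
        have h3 : 0 ≤ (-d / 2) * (1 - w) * (1 - w) :=
          mul_nonneg (mul_nonneg (by linarith) (by linarith [hw1.2])) (by linarith [hw1.2])
        nlinarith
      · have hp := hpos x ⟨hx0, hx1⟩
        have := (hc x hx).eventually (lt_mem_nhds (show φ x / 2 < φ x by linarith))
        refine ⟨_, this, φ x / 2, by linarith, ?_⟩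
        intro w hw hw1
        simp only [mem_ofPred_eq] at hw
        nlinarith [hw1.1, hw1.2, sq_nonneg w, sq_nonneg (1 - w)]
  obtain ⟨κ, hκ, h⟩ := key
  exact ⟨κ, hκ, fun w hw => h w hw hw⟩

lemma upper_of_lip {w x C : ℝ} (hw : w ∈ Icc (0:ℝ) 1) (hC : 0 ≤ C) (h1 : x ≤ C * w)
    (h2 : x ≤ C * (1 - w)) : x ≤ 2 * C * (w * (1 - w)) := by
  rcases le_total w (1 / 2) with h | h
  · have : 0 ≤ C * w * (1 - 2 * w) := mul_nonneg (mul_nonneg hC hw.1) (by linarith)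
    linarith
  · have : 0 ≤ C * (1 - w) * (2 * w - 1) :=
      mul_nonneg (mul_nonneg hC (by linarith [hw.2])) (by linarith)
    linarith

lemma diff_bounds {φ ψ : ℝ → ℝ} {C : ℝ} (h : ContDiffOn ℝ 2 φ (Icc 0 1))
    (h' : ContDiffOn ℝ 2 ψ (Icc 0 1)) (h0 : φ 0 = 0) (h1 : φ 1 = 0) (h0' : ψ 0 = 0) (h1' : ψ 1 = 0)
    (hd : derivWithin φ (Icc 0 1) 0 = 1) (hd' : derivWithin ψ (Icc 0 1) 0 = 1)
    (hC : ∀ n : ℕ, n ≤ 2 → ∀ w ∈ Icc (0:ℝ) 1, |iteratedDerivWithin n φ (Icc 0 1) w -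
        iteratedDerivWithin n ψ (Icc 0 1) w| ≤ C) :
    ∀ w ∈ Icc (0:ℝ) 1, |φ w - ψ w| ≤ C * w ^ 2 ∧ |φ w - ψ w| ≤ C * (1 - w) := by
  have hu := uniqueDiffOn_Icc (zero_lt_one (α := ℝ))
  have hdφ : DifferentiableOn ℝ φ (Icc 0 1) := h.differentiableOn (by norm_num)
  have hdψ : DifferentiableOn ℝ ψ (Icc 0 1) := h'.differentiableOn (by norm_num)
  have hsub : ContDiffOn ℝ 2 (φ - ψ) (Icc 0 1) := h.sub h'
  intro w hw
  constructor
  · have := taylor_two (d := 0) (C := C) hsub (by simp [h0, h0']) ?_ ?_ w hw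
    · simpa using this
    · rw [derivWithin_sub (hdφ 0 (by simp)) (hdψ 0 (by simp)), hd, hd', sub_self]
    · intro x hx
      rw [iteratedDerivWithin_sub hx hu (h x hx) (h' x hx)]
      exact hC 2 le_rfl x hx
  · refine (lip_ends (C := C) hsub (by simp [h0, h0']) (by simp [h1, h1']) ?_ w hw).2
    intro x hx
    rw [derivWithin_sub (hdφ x hx) (hdψ x hx)]
    simpa [iteratedDerivWithin_one] using hC 1 (by norm_num) x hx

lemma mk_front {g p : ℝ → ℝ} {c κ K : ℝ} (hp : IsProf g c p) (hc : 0 ≤ c)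
    (hgc : ContinuousOn g (Icc 0 1)) (hκ : 0 < κ)
    (hg : ∀ w ∈ Icc (0:ℝ) 1, κ * (w * (1 - w)) ≤ g w)
    (hK : ∀ w ∈ Icc (0:ℝ) 1, g w ≤ K * (w * (1 - w))) : ∃ W, IsFront g c W := by
  obtain ⟨C, hC, hpC⟩ := prof_upper hp hc hκ hK hg
  exact prof_to_front hp hgc hC hpC

/-- A profile that is a supersolution for another nonlinearity and speed. -/
lemma prof_super {g h p : ℝ → ℝ} {c c' κ K ε : ℝ} (hp : IsProf g c p)
    (hgc : ContinuousOn h (Icc 0 1)) (hκ : 0 < κ)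
    (hg : ∀ w ∈ Icc (0:ℝ) 1, κ * (w * (1 - w)) ≤ h w)
    (hK : ∀ w ∈ Icc (0:ℝ) 1, h w ≤ K * (w * (1 - w))) (hε : 0 < ε)
    (hl : ∀ w ∈ Icc (0:ℝ) 1, ε * (w * (1 - w)) ≤ p w)
    (hd : ∀ w ∈ Ioo (0:ℝ) 1, c - g w / p w ≤ c' - h w / p w) : ∃ p, IsProf h c' p :=
  exists_prof (q1 := p) (q2 := p) (q1' := fun w => c - g w / p w) (q2' := fun w => c - g w / p w)
    (w0 := 1 / 2) hgc hκ hg hK hε hp.cont hp.p1 hl (fun w hw => ⟨hp.der w hw, hd w hw⟩)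
    (by constructor <;> norm_num) (hp.cont.mono (Icc_subset_Icc_right (by norm_num))) hp.p0
    (fun w hw => hl w ⟨hw.1, hw.2.trans (by norm_num)⟩)
    (fun w hw => ⟨hp.der w ⟨hw.1, hw.2.trans (by norm_num)⟩,
      hd w ⟨hw.1, hw.2.trans (by norm_num)⟩⟩) le_rfl

/-- If a profile at speed `2` lies strictly below the barrier, the nonlinearity can be increased. -/
lemma prof_room {g h p : ℝ → ℝ} {κ K M w0 t0 δ : ℝ} (hp : IsProf g 2 p)
    (hκ : 0 < κ) (hg : ∀ w ∈ Icc (0:ℝ) 1, κ * (w * (1 - w)) ≤ g w)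
    (hhc : ContinuousOn h (Icc 0 1))
    (hh : ∀ w ∈ Icc (0:ℝ) 1, κ * (w * (1 - w)) ≤ h w)
    (hK : ∀ w ∈ Icc (0:ℝ) 1, h w ≤ K * (w * (1 - w)))
    (hhM : ∀ w ∈ Icc (0:ℝ) 1, h w ≤ w + M * w ^ 2)
    (hw0 : w0 ∈ Ioo (0:ℝ) 1) (ht0 : 0 < t0) (ht4 : t0 ≤ 1 / 4) (hM : 2 * M * w0 ≤ t0 ^ 2)
    (hδ : 0 < δ) (hlow : p w0 + δ ≤ w0 * (1 - t0))
    (hgh : ∀ w ∈ Icc (0:ℝ) 1, h w ≤ g w + δ ^ 2 * (1 - w)) : ∃ p, IsProf h 2 p := by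
  obtain ⟨ε, hε, hε1, hεc⟩ := exists_eps 2 hκ (show (0:ℝ) < 3 / 4 by norm_num)
  have hl := prof_lower hp hε hεc hg hκ
  refine exists_prof (q1 := fun w => p w + δ * (1 - w)) (q2 := bar t0 w0)
    (q1' := fun w => (2 - g w / p w) + δ * (0 - 1))
    (q2' := fun w => 1 - barTheta t0 w0 w - 2 * barTheta t0 w0 w ^ 2) (w0 := w0)
    hhc hκ hh hK hε (hp.cont.add (by fun_prop)) (by simp [hp.p1]) ?_ ?_ hw0 (bar_cont ht0 ht4)
    (by simp [bar]) ?_ ?_ ?_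
  · intro w hw
    have := mul_nonneg hδ.le (sub_nonneg.2 hw.2)
    linarith [hl w hw]
  · intro w hw
    refine ⟨(hp.der w hw).add
      (((hasDerivAt_const w (1:ℝ)).sub (hasDerivAt_id w)).const_mul δ), ?_⟩
    have hp0 := hp.pos w hw
    have hw' := Ioo_subset_Icc_self hw
    have h1w : 0 < 1 - w := by linarith [hw.2]
    have hq : 0 < δ * (1 - w) := mul_pos hδ h1w
    have hg0 : 0 ≤ g w := (mul_nonneg hκ.le (mul_nonneg hw.1.le h1w.le)).trans (hg w hw')
    have h1 : h w / (p w + δ * (1 - w)) ≤ g w / p w + δ := by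
      rw [div_le_iff₀ (by positivity)]
      have e : (g w / p w + δ) * (p w + δ * (1 - w)) =
          g w + g w / p w * (δ * (1 - w)) + δ * p w + δ ^ 2 * (1 - w) := by
        field_simp
        ring
      rw [e]
      have := hgh w hw'
      have : 0 ≤ g w / p w * (δ * (1 - w)) := by positivity
      have : 0 ≤ δ * p w := by positivity
      linarith
    linarith
  · intro w hw
    have h1 := (bar_le ht0 ht4 hw).1
    have h2 : ε * (w * (1 - w)) ≤ 3 / 4 * w := by
      have h3 : w * (1 - w) ≤ w := by nlinarith [hw.1]
      have h4 : 0 ≤ w * (1 - w) := mul_nonneg hw.1 (by linarith [hw.2, hw0.2])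
      calc ε * (w * (1 - w)) ≤ 3 / 4 * (w * (1 - w)) := mul_le_mul_of_nonneg_right hε1 h4
        _ ≤ 3 / 4 * w := by linarith
    linarith
  · intro w hw
    have hw' : w ∈ Ioc 0 w0 := ⟨hw.1, hw.2.le⟩
    exact ⟨bar_hasDerivAt ht0 hw',
      bar_super ht0 ht4 hw' hM (hhM w ⟨hw.1.le, (hw.2.trans hw0.2).le⟩)⟩
  · have : bar t0 w0 w0 = w0 * (1 - t0) := by simp [bar, barTheta]
    simp only [this]
    nlinarith [hw0.1]

lemma t_choice {M w : ℝ} (hM : 0 < M) (hw : w ∈ Ioc 0 (1 / (32 * M + 2))) :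
    w ∈ Ioo (0:ℝ) 1 ∧ 0 < √(2 * M) * √w ∧ √(2 * M) * √w ≤ 1 / 4 ∧
      2 * M * w ≤ (√(2 * M) * √w) ^ 2 ∧ M * w ≤ 1 := by
  have h1 := hw.2
  rw [le_div_iff₀ (by positivity)] at h1
  have h0 := hw.1
  have h2 : 0 < M * w := mul_pos hM h0
  have e : √(2 * M) * √w = √(2 * M * w) := (Real.sqrt_mul (by positivity) w).symm
  refine ⟨⟨h0, by nlinarith⟩, ?_, ?_, ?_, by nlinarith⟩
  · rw [e]; exact Real.sqrt_pos.2 (by positivity)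
  · rw [e]; exact Real.sqrt_le_iff.2 ⟨by norm_num, by nlinarith⟩
  · rw [e, Real.sq_sqrt (by positivity)]

theorem core (f : ℝ → ℝ → ℝ) (cstar : ℝ → ℝ) (s₁ s₂ κ L : ℝ)
    (hfc : ∀ s, 0 ≤ s → ContinuousOn (fun w => f w s) (Icc 0 1))
    (hκ : 0 < κ) (hfκ : ∀ s, 0 ≤ s → ∀ w ∈ Icc (0:ℝ) 1, κ * (w * (1 - w)) ≤ f w s)
    (hfK : ∀ s, 0 ≤ s → ∃ K, ∀ w ∈ Icc (0:ℝ) 1, f w s ≤ K * (w * (1 - w)))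
    (hfM : ∀ s, 0 ≤ s → ∃ M > 0, ∀ w ∈ Icc (0:ℝ) 1, |f w s - w| ≤ M * w ^ 2)
    (hL : 0 < L) (hfL : ∀ sa sb : ℝ, 0 ≤ sa → 0 ≤ sb → ∀ w ∈ Icc (0:ℝ) 1,
      |f w sa - f w sb| ≤ L * |sa - sb| * w ^ 2 ∧ |f w sa - f w sb| ≤ L * |sa - sb| * (1 - w))
    (hmono : ∀ s sh : ℝ, 0 ≤ s → s < sh → ∀ w ∈ Ioo (0:ℝ) 1, f w s < f w sh)
    (hmin : ∀ s, 0 ≤ s → 2 ≤ cstar s ∧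
      ∀ c, (∃ W : ℝ → ℝ, IsFront (fun w => f w s) c W) ↔ cstar s ≤ c)
    (hs₁ : 0 < s₁) (hc₁ : cstar s₁ = 2) (hs₂ : s₁ < s₂) (hc₂ : 2 < cstar s₂) :
    ∃ sstar : ℝ, s₁ ≤ sstar ∧ sstar < s₂ ∧
      (∀ s, 0 ≤ s → s ≤ sstar → cstar s = 2) ∧
      (∀ s, sstar < s → 2 < cstar s) ∧
      (∀ s, 0 ≤ s → ∀ W : ℝ → ℝ, IsFront (fun w => f w s) (cstar s) W →
        ((∃ B > (0:ℝ),
            (fun ξ => W ξ - B * Real.exp (-ξ)) =o[atTop] fun ξ => Real.exp (-ξ)) ↔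
          s = sstar)) := by
  have hpos : ∀ s, 0 ≤ s → ∀ w ∈ Ioo (0:ℝ) 1, 0 < f w s := fun s hs w hw =>
    (mul_pos hκ (mul_pos hw.1 (by linarith [hw.2]))).trans_le (hfκ s hs w (Ioo_subset_Icc_self hw))
  have hnn : ∀ s, 0 ≤ s → ∀ w ∈ Icc (0:ℝ) 1, 0 ≤ f w s := fun s hs w hw =>
    (mul_nonneg hκ.le (mul_nonneg hw.1 (by linarith [hw.2]))).trans (hfκ s hs w hw)
  have hprof : ∀ s, 0 ≤ s → ∀ c, cstar s ≤ c → ∃ p, IsProf (fun w => f w s) c p := by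
    intro s hs c hc
    obtain ⟨W, hW⟩ := ((hmin s hs).2 c).2 hc
    obtain ⟨p, hp, -⟩ := front_to_prof hW (hpos s hs)
    exact ⟨p, hp⟩
  have hfront : ∀ s, 0 ≤ s → ∀ c, 0 ≤ c → (∃ p, IsProf (fun w => f w s) c p) → cstar s ≤ c := by
    rintro s hs c hc ⟨p, hp⟩
    obtain ⟨K, hK⟩ := hfK s hs
    exact ((hmin s hs).2 c).1 (mk_front hp hc (hfc s hs) hκ (hfκ s hs) hK)
  obtain ⟨ε, hε, -, hεc⟩ := exists_eps 2 hκ zero_lt_one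
  have hM : ∀ s sh, 0 ≤ s → s < sh → cstar sh = 2 → cstar s = 2 := by
    intro s sh hs hlt hsh
    have hsh0 : 0 ≤ sh := hs.trans hlt.le
    refine le_antisymm (hfront s hs 2 (by norm_num) ?_) (hmin s hs).1
    obtain ⟨p, hp⟩ := hprof sh hsh0 2 hsh.le
    obtain ⟨K, hK⟩ := hfK s hs
    refine prof_super hp (hfc s hs) hκ (hfκ s hs) hK hε
      (prof_lower hp hε hεc (hfκ sh hsh0) hκ) ?_
    intro w hw
    have := div_le_div_of_nonneg_right (hmono s sh hs hlt w hw).le (hp.pos w hw).le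
    linarith
  set S := {s | 0 ≤ s ∧ cstar s = 2} with hS
  have hS1 : s₁ ∈ S := ⟨hs₁.le, hc₁⟩
  have hS2 : ∀ s ∈ S, s ≤ s₂ := by
    intro s hs
    by_contra hcon
    push Not at hcon
    have := hM s₂ s (hs₁.le.trans hs₂.le) hcon hs.2
    linarith
  have hbdd : BddAbove S := ⟨s₂, hS2⟩
  set sstar := sSup S with hss
  have h1s : s₁ ≤ sstar := le_csSup hbdd hS1
  have hs0 : 0 < sstar := hs₁.trans_le h1s
  have hss2 : sstar ≤ s₂ := csSup_le ⟨s₁, hS1⟩ hS2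
  -- the threshold value itself is linearly selected
  have hE1 : cstar sstar = 2 := by
    refine le_antisymm ?_ (hmin sstar hs0.le).1
    by_contra hcon
    push Not at hcon
    set η := (cstar sstar - 2) / 2 with hη
    have hη0 : 0 < η := by rw [hη]; linarith
    have hr : 0 < η * ε / (2 * L) := by positivity
    obtain ⟨s, hsS, hs⟩ := exists_lt_of_lt_csSup ⟨s₁, hS1⟩
      (show sstar - η * ε / (2 * L) < sSup S by linarith)
    have hsle : s ≤ sstar := le_csSup hbdd hsS
    have hdiff : (sstar - s) * (2 * L) ≤ η * ε := by
      rw [← le_div_iff₀ (by positivity)]; linarith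
    obtain ⟨p, hp⟩ := hprof s hsS.1 2 hsS.2.le
    have hl := prof_lower hp hε hεc (hfκ s hsS.1) hκ
    obtain ⟨K, hK⟩ := hfK sstar hs0.le
    have h := hfront sstar hs0.le (2 + η) (by linarith) (prof_super hp (hfc sstar hs0.le) hκ
      (hfκ sstar hs0.le) hK hε hl ?_)
    · linarith
    · intro w hw
      have hw' := Ioo_subset_Icc_self hw
      have hp0 := hp.pos w hw
      obtain ⟨h1, h2⟩ := hfL sstar s hs0.le hsS.1 w hw'
      rw [abs_of_nonneg (sub_nonneg.2 hsle)] at h1 h2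
      have hC0 : 0 ≤ L * (sstar - s) := mul_nonneg hL.le (by linarith)
      have h3 : L * (sstar - s) * w ^ 2 ≤ L * (sstar - s) * w :=
        mul_le_mul_of_nonneg_left (by nlinarith [hw.1, hw.2]) hC0
      have h4 := upper_of_lip hw' hC0 (((le_abs_self _).trans h1).trans h3)
        ((le_abs_self _).trans h2)
      have hb : 0 ≤ w * (1 - w) := mul_nonneg hw.1.le (by linarith [hw.2])
      have h5 := mul_le_mul_of_nonneg_right hdiff hb
      have h6 := mul_le_mul_of_nonneg_left (hl w hw') hη0.le
      have h7 : (f w sstar - f w s) / p w ≤ η := by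
        rw [div_le_iff₀ hp0]; linarith
      rw [sub_div] at h7
      linarith
  have hlt2 : sstar < s₂ := by
    refine lt_of_le_of_ne hss2 fun h => ?_
    rw [h] at hE1; linarith
  have habove : ∀ s, sstar < s → 2 < cstar s := by
    intro s hs
    have hs' : 0 ≤ s := (hs0.trans hs).le
    refine lt_of_le_of_ne (hmin s hs').1 fun h => ?_
    have : s ≤ sstar := le_csSup hbdd ⟨hs', h.symm⟩
    linarith
  have hbelow : ∀ s, 0 ≤ s → s ≤ sstar → cstar s = 2 := by
    intro s hs hle
    rcases hle.lt_or_eq with h | h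
    · exact hM s sstar hs h hE1
    · rw [h, hE1]
  obtain ⟨Ms, hMs0, hMs⟩ := hfM sstar hs0.le
  -- two-sided bounds for the profile at the threshold
  have hE2 : ∀ M, Ms + L ≤ M → ∀ p, IsProf (fun w => f w sstar) 2 p →
      ∀ w ∈ Ioc 0 (1 / (32 * M + 2)), w * (1 - √(2 * M) * √w) ≤ p w ∧
        p w ≤ w * (1 + √(2 * M) * √w) := by
    intro M hMM p hp w hw
    have hM0 : 0 < M := by linarith
    obtain ⟨t1, t2, t3, t4, t5⟩ := t_choice hM0 hw
    set t := √(2 * M) * √w with ht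
    constructor
    · by_contra hcon
      push Not at hcon
      set δ := w * (1 - t) - p w with hδ
      have hδ0 : 0 < δ := by rw [hδ]; linarith
      set r := min 1 (δ ^ 2 / L) with hr
      have hr0 : 0 < r := lt_min one_pos (by positivity)
      have hr1 : r ≤ 1 := min_le_left _ _
      have hr2 : L * r ≤ δ ^ 2 := by
        have : r ≤ δ ^ 2 / L := min_le_right _ _
        rw [le_div_iff₀ hL] at this
        linarith
      have hsr : 0 ≤ sstar + r := by linarith
      obtain ⟨K, hK⟩ := hfK (sstar + r) hsr
      have hdl : ∀ x ∈ Icc (0:ℝ) 1, f x (sstar + r) - f x sstar ≤ L * r * x ^ 2 ∧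
          f x (sstar + r) - f x sstar ≤ L * r * (1 - x) := by
        intro x hx
        have := hfL (sstar + r) sstar hsr hs0.le x hx
        rw [add_sub_cancel_left, abs_of_pos hr0] at this
        exact ⟨(le_abs_self _).trans this.1, (le_abs_self _).trans this.2⟩
      have h := hfront (sstar + r) hsr 2 (by norm_num)
        (prof_room (M := M) hp hκ (hfκ sstar hs0.le) (hfc _ hsr) (hfκ _ hsr) hK ?_ t1 t2 t3 t4 hδ0
          (by linarith) ?_)
      · linarith [habove (sstar + r) (by linarith)]
      · intro x hx
        have h1 := (hdl x hx).1
        have h2 := (abs_le.1 (hMs x hx)).2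
        have h3 : (L * r + Ms) * x ^ 2 ≤ M * x ^ 2 :=
          mul_le_mul_of_nonneg_right (by nlinarith) (sq_nonneg x)
        linarith
      · intro x hx
        have h1 := (hdl x hx).2
        have h3 : L * r * (1 - x) ≤ δ ^ 2 * (1 - x) :=
          mul_le_mul_of_nonneg_right hr2 (by linarith [hx.2])
        linarith
    · refine prof_two_upper hp (hnn sstar hs0.le) hM0.le ?_ t1 t2 t4
      intro x hx
      have h2 := (abs_le.1 (hMs x hx)).1
      have h3 : Ms * x ^ 2 ≤ M * x ^ 2 :=
          mul_le_mul_of_nonneg_right (by linarith) (sq_nonneg x)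
      linarith
  refine ⟨sstar, h1s, hlt2, hbelow, habove, ?_⟩
  intro s hs W hW
  simp only [littleO_iff]
  constructor
  · rintro ⟨B, hB, hlim⟩
    obtain ⟨M1, hM10, hM1⟩ := hfM s hs
    rcases lt_trichotomy s sstar with h | h | h
    · exfalso
      have hcs := hbelow s hs h.le
      rw [hcs] at hW
      obtain ⟨p, hp, hWp⟩ := front_to_prof hW (hpos s hs)
      obtain ⟨ph, hph⟩ := hprof sstar hs0.le 2 hE1.le
      set M := max M1 (Ms + L) with hMdef
      have hMM : Ms + L ≤ M := le_max_right _ _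
      have hM0 : 0 < M := by linarith
      have hgM : ∀ w ∈ Icc (0:ℝ) 1, f w s ≤ w + M * w ^ 2 := by
        intro x hx
        have h2 := (abs_le.1 (hM1 x hx)).2
        have h3 : M1 * x ^ 2 ≤ M * x ^ 2 :=
          mul_le_mul_of_nonneg_right (le_max_left _ _) (sq_nonneg x)
        linarith
      have hwb : 1 / (32 * M + 2) ∈ Ioc 0 (1 / (32 * M + 2)) := ⟨by positivity, le_rfl⟩
      obtain ⟨t1, t2, t3, t4, t5⟩ := t_choice hM0 hwb
      refine prof_contra (C := √(2 * M)) (M := M) hp hph (hmono s sstar hs h) (hpos s hs) hM0.le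
        hgM (Real.sqrt_pos.2 (by positivity)) t1 t3 t5 ?_
        (fun w hw => (hE2 M hMM ph hph w hw).1) (fun w hw => (hE2 M hMM ph hph w hw).2)
      intro w hw
      obtain ⟨t1, t2, t3, t4, t5⟩ := t_choice hM0 hw
      exact fast_lower hp hW hWp (hnn s hs) hgM hB hlim t1 t2 t3 t4
    · exact h
    · exfalso
      refine fast_contra_gt (M := M1) hW (habove s h) ?_ hB hlim
      intro x hx
      have h2 := (abs_le.1 (hM1 x hx)).2
      linarith
  · rintro rfl
    rw [hE1] at hW
    obtain ⟨p, hp, hWp⟩ := front_to_prof hW (hpos _ hs)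
    have hM0 : 0 < Ms + L := by linarith
    refine fast_asymp (C := √(2 * (Ms + L))) (wb := 1 / (32 * (Ms + L) + 2)) hW hWp
      (Real.sqrt_pos.2 (by positivity)) (by positivity) ?_
    intro w hw
    obtain ⟨h1, h2⟩ := hE2 (Ms + L) le_rfl p hp w hw
    rw [abs_le]
    constructor <;> linarith

/-- Theorem: under (A1)-(A5) there is a threshold `s* ∈ [s₁, s₂)` for linear vs. nonlinear
speed selection, and the minimal front decays like `B e^{-ξ}` (with `B > 0`) iff `s = s*`. -/
theorem threshold_scalar_equation
    (f : ℝ → ℝ → ℝ) (cstar : ℝ → ℝ) (s₁ s₂ : ℝ)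
    -- (A1) monostable condition, with ∂_w f(0;s) = 1
    (hA1 : ∀ s, 0 ≤ s →
      ContDiffOn ℝ 2 (fun w => f w s) (Icc 0 1) ∧
      f 0 s = 0 ∧ f 1 s = 0 ∧
      derivWithin (fun w => f w s) (Icc 0 1) 0 = 1 ∧
      derivWithin (fun w => f w s) (Icc 0 1) 1 < 0 ∧
      (∀ w ∈ Ioo (0:ℝ) 1, 0 < f w s))
    -- (A2) Lipschitz continuity in the parameter, for f, f', f''
    (hA2 : ∃ L₀ > (0:ℝ), ∀ n : ℕ, n ≤ 2 → ∀ w ∈ Icc (0:ℝ) 1, ∀ sa sb : ℝ, 0 ≤ sa → 0 ≤ sb →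
      |iteratedDerivWithin n (fun w => f w sa) (Icc 0 1) w -
        iteratedDerivWithin n (fun w => f w sb) (Icc 0 1) w| ≤ L₀ * |sa - sb|)
    -- (A3) monotonicity condition
    (hA3 : ∀ s sh : ℝ, 0 ≤ s → s < sh →
      (∀ w ∈ Ioo (0:ℝ) 1, f w s < f w sh) ∧
      iteratedDerivWithin 2 (fun w => f w s) (Icc 0 1) 0 <
        iteratedDerivWithin 2 (fun w => f w sh) (Icc 0 1) 0)
    -- minimal-speed characterization: fronts exist exactly for speeds c ≥ c*(s) ≥ 2
    (hmin : ∀ s, 0 ≤ s → 2 ≤ cstar s ∧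
      ∀ c, (∃ W : ℝ → ℝ, IsFront (fun w => f w s) c W) ↔ cstar s ≤ c)
    -- the minimal front is unique up to translation
    (huniq : ∀ s, 0 ≤ s → ∀ W₁ W₂ : ℝ → ℝ, IsFront (fun w => f w s) (cstar s) W₁ →
      IsFront (fun w => f w s) (cstar s) W₂ → ∃ τ, ∀ ξ, W₂ ξ = W₁ (ξ + τ))
    -- (A4) KPP condition at s₁, hence linear selection there
    (hs₁ : 0 < s₁) (hA4 : ∀ w ∈ Icc (0:ℝ) 1, f w s₁ ≤ w) (hc₁ : cstar s₁ = 2)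
    -- (A5) nonlinear selection at some s₂ > s₁
    (hs₂ : s₁ < s₂) (hc₂ : 2 < cstar s₂) :
    ∃ sstar : ℝ, s₁ ≤ sstar ∧ sstar < s₂ ∧
      (∀ s, 0 ≤ s → s ≤ sstar → cstar s = 2) ∧
      (∀ s, sstar < s → 2 < cstar s) ∧
      (∀ s, 0 ≤ s → ∀ W : ℝ → ℝ, IsFront (fun w => f w s) (cstar s) W →
        ((∃ B > (0:ℝ),
            (fun ξ => W ξ - B * Real.exp (-ξ)) =o[atTop] fun ξ => Real.exp (-ξ)) ↔
          s = sstar)) := by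
  obtain ⟨L, hL, hA2⟩ := hA2
  have hdiff : ∀ s, 0 ≤ s → DifferentiableOn ℝ (fun w => f w s) (Icc 0 1) := fun s hs =>
    (hA1 s hs).1.differentiableOn (by norm_num)
  obtain ⟨κ, hκ, hκ0⟩ : ∃ κ > 0, ∀ w ∈ Icc (0:ℝ) 1, κ * (w * (1 - w)) ≤ f w 0 := by
    obtain ⟨a1, a2, a3, a4, a5, a6⟩ := hA1 0 le_rfl
    refine lower_kpp a1.continuousOn a2 a3 ?_ (hdiff 0 le_rfl 1 (by simp)).hasDerivWithinAt a5 a6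
    have := (hdiff 0 le_rfl 0 (by simp)).hasDerivWithinAt
    rwa [a4] at this
  refine core f cstar s₁ s₂ κ L (fun s hs => (hA1 s hs).1.continuousOn) hκ ?_ ?_ ?_ hL ?_
    (fun s sh hs hlt => (hA3 s sh hs hlt).1) hmin hs₁ hc₁ hs₂ hc₂
  · intro s hs w hw
    refine (hκ0 w hw).trans ?_
    rcases hs.eq_or_lt with rfl | hs'
    · exact le_rfl
    rcases hw.1.eq_or_lt with rfl | h0
    · rw [(hA1 0 le_rfl).2.1, (hA1 s hs).2.1]
    rcases hw.2.eq_or_lt with rfl | h1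
    · rw [(hA1 0 le_rfl).2.2.1, (hA1 s hs).2.2.1]
    · exact ((hA3 0 s le_rfl hs').1 w ⟨h0, h1⟩).le
  · intro s hs
    obtain ⟨a1, a2, a3, a4, a5, a6⟩ := hA1 s hs
    obtain ⟨C, hC, h⟩ := bound_iter (n := 1) (by norm_num) a1
    refine ⟨2 * C, fun w hw => ?_⟩
    obtain ⟨b1, b2⟩ := lip_ends a1 a2 a3 (by simpa [iteratedDerivWithin_one] using h) w hw
    exact upper_of_lip hw hC.le ((le_abs_self _).trans b1) ((le_abs_self _).trans b2)
  · intro s hs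
    obtain ⟨a1, a2, a3, a4, a5, a6⟩ := hA1 s hs
    obtain ⟨C, hC, h⟩ := bound_iter (n := 2) le_rfl a1
    refine ⟨C, hC, fun w hw => ?_⟩
    have := taylor_two a1 a2 a4 h w hw
    rwa [one_mul] at this
  · intro sa sb hsa hsb
    obtain ⟨a1, a2, a3, a4, a5, a6⟩ := hA1 sa hsa
    obtain ⟨b1, b2, b3, b4, b5, b6⟩ := hA1 sb hsb
    exact diff_bounds a1 b1 a2 a3 b2 b3 a4 b4 (fun n hn w hw => hA2 n hn w hw sa sb hsa hsb)
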